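/- arXiv:2107.02231 — 4 statements merged into one kernel-verified Lean document; each statement's English description precedes it below -/
import Mathlib

section
/- Let X be a finite set of distinct points in P^m × P^n and let k, l ∈ N. If HF_X(i,k) = HF_X(i+1,k) then HF_X(i,k+1) = HF_X(i+1,k+1); and if HF_X(l,j) = HF_X(l,j+1) then HF_X(l+1,j) = HF_X(l+1,j+1). In particular, setting ν_k = min{ i ∈ N : HF_X(i,k) = HF_X(i+1,k) }, ϱ_l = min{ j ∈ N : HF_X(l,j) = HF_X(l,j+1) }, ν = sup_k ν_k and ϱ = sup_l ϱ_l, one has (ν, ϱ) = (r_{X_1}, r_{X_2}), where r_{X_k} is the regularity index of HF_{X_k} for k = 1, 2. -/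
/- Common setup: finite sets of points in the multiprojective space
   `P^m x P^n` over a field `K` of characteristic zero, their bihomogeneous
   vanishing ideals, bigraded Hilbert functions, Kähler differents,
   separators, Cayley-Bacharach property and complete intersections. -/

open MvPolynomial

set_option maxHeartbeats 1000000
set_option synthInstance.maxHeartbeats 400000

noncomputable section

namespace MultiProjPoints

variable (K : Type) [Field K] [CharZero K] [DecidableEq K]

/-- The bigraded coordinate ring `S = K[X_0,…,X_m,Y_0,…,Y_n]` of `P^m × P^n`. -/
abbrev BiRing (m n : ℕ) : Type := MvPolynomial (Fin (m+1) ⊕ Fin (n+1)) K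

/-- The weights giving the bigrading: `deg X_i = (1,0)`, `deg Y_j = (0,1)`. -/
def biwt (m n : ℕ) : (Fin (m+1) ⊕ Fin (n+1)) → ℤ × ℤ :=
  Sum.elim (fun _ => ((1 : ℤ), (0 : ℤ))) (fun _ => ((0 : ℤ), (1 : ℤ)))

variable {m n : ℕ}

/-- A (representative of a) point of `P^m × P^n`. -/
abbrev BiPt (m n : ℕ) : Type := (Fin (m+1) → K) × (Fin (n+1) → K)

/-- `F` is bihomogeneous of degree `d`. -/
def IsBihom (F : BiRing K m n) (d : ℤ × ℤ) : Prop :=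
  IsWeightedHomogeneous (biwt m n) F d

/-- Evaluation of a polynomial at (a representative of) a point. -/
def evalB (p : BiPt K m n) (F : BiRing K m n) : K :=
  eval (Sum.elim p.1 p.2) F

/-- A finset of representatives is a good configuration of points of
`P^m × P^n`: all representatives are nonzero, and proportional
representatives coincide (so distinct elements are distinct projective
points, and images under the two projections behave correctly). -/
def GoodConfig (𝕏 : Finset (BiPt K m n)) : Prop :=
  (∀ p ∈ 𝕏, p.1 ≠ 0 ∧ p.2 ≠ 0) ∧
  (∀ p ∈ 𝕏, ∀ q ∈ 𝕏, (∃ c : K, c ≠ 0 ∧ p.1 = c • q.1) → p.1 = q.1) ∧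
  (∀ p ∈ 𝕏, ∀ q ∈ 𝕏, (∃ c : K, c ≠ 0 ∧ p.2 = c • q.2) → p.2 = q.2)

/-- The bihomogeneous vanishing ideal `I_𝕏` of a set of points. -/
def vIdealB (𝕏 : Finset (BiPt K m n)) : Ideal (BiRing K m n) :=
  Ideal.span {F | (∃ d, IsBihom K F d) ∧ ∀ p ∈ 𝕏, evalB K p F = 0}

/-- The bihomogeneous vanishing ideal of a single point. -/
def ptIdealB (p : BiPt K m n) : Ideal (BiRing K m n) :=
  Ideal.span {F | (∃ d, IsBihom K F d) ∧ evalB K p F = 0}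

/-- The degree-`d` piece of `S/I`. -/
def degPieceB (I : Ideal (BiRing K m n)) (d : ℤ × ℤ) :
    Submodule K (BiRing K m n ⧸ I) :=
  (weightedHomogeneousSubmodule K (biwt m n) d).map
    (Ideal.Quotient.mkₐ K I).toLinearMap

/-- The Hilbert function of `S/I`. -/
def HFI (I : Ideal (BiRing K m n)) (d : ℤ × ℤ) : ℕ :=
  Module.finrank K (degPieceB K I d)

/-- The Hilbert function of a set of points in `P^m × P^n`. -/
def HFB (𝕏 : Finset (BiPt K m n)) (d : ℤ × ℤ) : ℕ :=
  HFI K (vIdealB K 𝕏) d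

/-- The Hilbert function of a (bihomogeneous) ideal `J` of `R_𝕏 = S/I`. -/
def HFIdealB (I : Ideal (BiRing K m n)) (J : Ideal (BiRing K m n ⧸ I))
    (d : ℤ × ℤ) : ℕ :=
  Module.finrank K ↥((Submodule.restrictScalars K J) ⊓ degPieceB K I d)

/- ### Single projective space `P^N` -/

/-- The coordinate ring `K[X_0,…,X_N]` of `P^N`. -/
abbrev PRing (N : ℕ) : Type := MvPolynomial (Fin (N+1)) K

/-- The standard grading on `K[X_0,…,X_N]` (with values in `ℤ`). -/
def wt1 (N : ℕ) : Fin (N+1) → ℤ := fun _ => 1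

/-- `F` is homogeneous of degree `d`. -/
def IsHom1 {N : ℕ} (F : PRing K N) (d : ℤ) : Prop :=
  IsWeightedHomogeneous (wt1 N) F d

/-- A good finite set of representatives of points in `P^N`. -/
def GoodSet {N : ℕ} (Y : Finset (Fin (N+1) → K)) : Prop :=
  (∀ q ∈ Y, q ≠ 0) ∧
  (∀ p ∈ Y, ∀ q ∈ Y, (∃ c : K, c ≠ 0 ∧ p = c • q) → p = q)

/-- The homogeneous vanishing ideal of a set of points in `P^N`. -/
def vIdeal1 {N : ℕ} (Y : Finset (Fin (N+1) → K)) : Ideal (PRing K N) :=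
  Ideal.span {F | (∃ d, IsHom1 K F d) ∧ ∀ q ∈ Y, eval q F = 0}

/-- The degree-`d` piece of `K[X_0,…,X_N]/I`. -/
def degPiece1 {N : ℕ} (I : Ideal (PRing K N)) (d : ℤ) :
    Submodule K (PRing K N ⧸ I) :=
  (weightedHomogeneousSubmodule K (wt1 N) d).map
    (Ideal.Quotient.mkₐ K I).toLinearMap

/-- The Hilbert function of a set of points in `P^N`. -/
def HF1 {N : ℕ} (Y : Finset (Fin (N+1) → K)) (d : ℤ) : ℕ :=
  Module.finrank K (degPiece1 K (vIdeal1 K Y) d)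

/-- The Hilbert function of a homogeneous ideal of `K[X_0,…,X_N]/I`. -/
def HFIdeal1 {N : ℕ} (I : Ideal (PRing K N)) (J : Ideal (PRing K N ⧸ I))
    (d : ℤ) : ℕ :=
  Module.finrank K ↥((Submodule.restrictScalars K J) ⊓ degPiece1 K I d)

/-- The degree `deg_Y(q)` of a point `q` in `Y ⊆ P^N`: the minimal degree of
a homogeneous separator of `q` in `Y`. -/
def deg1 {N : ℕ} (Y : Finset (Fin (N+1) → K)) (q : Fin (N+1) → K) : ℕ :=
  sInf {d : ℕ | ∃ F : PRing K N, IsHom1 K F (d : ℤ) ∧ eval q F ≠ 0 ∧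
    ∀ q' ∈ Y, q' ≠ q → eval q' F = 0}

/-- The regularity index of the Hilbert function of `Y ⊆ P^N`. -/
def regIndex1 {N : ℕ} (Y : Finset (Fin (N+1) → K)) : ℕ :=
  sInf {r : ℕ | ∀ i : ℕ, r ≤ i → HF1 K Y (i : ℤ) = Y.card}

/-- `Y ⊆ P^N` is a Cayley-Bacharach scheme. -/
def IsCB1 {N : ℕ} (Y : Finset (Fin (N+1) → K)) : Prop :=
  ∀ q ∈ Y, deg1 K Y q = regIndex1 K Y

/- ### Kähler differents -/

/-- The variables `X_1,…,X_m,Y_1,…,Y_n` indexed by `Fin (m+n)`. -/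
def bvar (m n : ℕ) (v : Fin (m+n)) : Fin (m+1) ⊕ Fin (n+1) :=
  if h : (v : ℕ) < m then Sum.inl ⟨(v : ℕ) + 1, by omega⟩
  else Sum.inr ⟨(v : ℕ) - m + 1, by have hv := v.isLt; omega⟩

/-- The Kähler different of `R = S/I` w.r.t. a system of generators `F` of
`I`: the ideal generated by the `(m+n)×(m+n)`-minors of the Jacobian matrix
`(∂F_k/∂X_i, ∂F_k/∂Y_j)`. -/
def kdiffB (I : Ideal (BiRing K m n)) {r : ℕ} (F : Fin r → BiRing K m n) :
    Ideal (BiRing K m n ⧸ I) :=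
  Ideal.span (Set.range fun ρ : Fin (m+n) → Fin r =>
    Ideal.Quotient.mk I (Matrix.det (Matrix.of fun u v : Fin (m+n) =>
      pderiv (bvar m n v) (F (ρ u)))))

/-- The Kähler different of `K[X_0,…,X_N]/I` w.r.t. a system of generators
`F` of `I` (minors w.r.t. the variables `X_1,…,X_N`). -/
def kdiff1 {N : ℕ} (I : Ideal (PRing K N)) {r : ℕ} (F : Fin r → PRing K N) :
    Ideal (PRing K N ⧸ I) :=
  Ideal.span (Set.range fun ρ : Fin N → Fin r =>
    Ideal.Quotient.mk I (Matrix.det (Matrix.of fun u v : Fin N =>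
      pderiv (Fin.succ v) (F (ρ u)))))

/-- The extension `ϑ_{𝕏₁} R_𝕏` to `R_𝕏 = S/I` of the Kähler different of
`𝕏₁ ⊆ P^m` computed from a system of generators `F` of `I_{𝕏₁}`. -/
def kdiffExtL (I : Ideal (BiRing K m n)) {r : ℕ} (F : Fin r → PRing K m) :
    Ideal (BiRing K m n ⧸ I) :=
  Ideal.span (Set.range fun ρ : Fin m → Fin r =>
    Ideal.Quotient.mk I (rename Sum.inl (Matrix.det (Matrix.of fun u v : Fin m =>
      pderiv (Fin.succ v) (F (ρ u))))))

/-- The extension `ϑ_{𝕏₂} R_𝕏` to `R_𝕏 = S/I` of the Kähler different of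
`𝕏₂ ⊆ P^n` computed from a system of generators `G` of `I_{𝕏₂}`. -/
def kdiffExtR (I : Ideal (BiRing K m n)) {r : ℕ} (G : Fin r → PRing K n) :
    Ideal (BiRing K m n ⧸ I) :=
  Ideal.span (Set.range fun ρ : Fin n → Fin r =>
    Ideal.Quotient.mk I (rename Sum.inr (Matrix.det (Matrix.of fun u v : Fin n =>
      pderiv (Fin.succ v) (G (ρ u))))))

/- ### Regular sequences, ACM, complete intersections -/

/-- `a, b` form a regular sequence. -/
def RegPair {A : Type*} [CommRing A] (a b : A) : Prop :=
  (∀ z : A, a * z = 0 → z = 0) ∧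
  (∀ z : A, b * z ∈ Ideal.span {a} → z ∈ Ideal.span {a})

/-- The image `x₀` of `X_0` in `S/I`. -/
def x0B (I : Ideal (BiRing K m n)) : BiRing K m n ⧸ I :=
  Ideal.Quotient.mk I (MvPolynomial.X (Sum.inl 0))

/-- The image `y₀` of `Y_0` in `S/I`. -/
def y0B (I : Ideal (BiRing K m n)) : BiRing K m n ⧸ I :=
  Ideal.Quotient.mk I (MvPolynomial.X (Sum.inr 0))

/-- The standing assumption for ACM sets of points: (after a change of
coordinates) `x₀, y₀` form a regular sequence in `R_𝕏`. -/
def ACMxy (𝕏 : Finset (BiPt K m n)) : Prop :=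
  RegPair (x0B K (vIdealB K 𝕏)) (y0B K (vIdealB K 𝕏))

/-- `𝕏` is arithmetically Cohen-Macaulay: some bihomogeneous linear forms
`ℓ` of degree `(1,0)` and `ℓ'` of degree `(0,1)` give a regular sequence in
`R_𝕏` (for points this is equivalent to `depth R_𝕏 = 2`). -/
def IsACM (𝕏 : Finset (BiPt K m n)) : Prop :=
  ∃ l l' : BiRing K m n, IsBihom K l (1, 0) ∧ IsBihom K l' (0, 1) ∧
    RegPair (Ideal.Quotient.mk (vIdealB K 𝕏) l) (Ideal.Quotient.mk (vIdealB K 𝕏) l')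

/-- A regular sequence in a commutative ring, given as a list:
each entry is a non-zerodivisor modulo the preceding ones, and the list
generates a proper ideal. -/
def IsRegSeq {A : Type*} [CommRing A] (l : List A) : Prop :=
  (∀ (i : ℕ) (h : i < l.length), ∀ z : A,
      l.get ⟨i, h⟩ * z ∈ Ideal.span {x | x ∈ l.take i} →
      z ∈ Ideal.span {x | x ∈ l.take i}) ∧
  Ideal.span {x | x ∈ l} ≠ ⊤

/-- `𝕏` is a complete intersection of type `(d_1,…,d_m,d'_1,…,d'_n)`. -/
def IsCIB (𝕏 : Finset (BiPt K m n)) (d : Fin m → ℕ) (d' : Fin n → ℕ) : Prop :=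
  ∃ (F : Fin m → BiRing K m n) (G : Fin n → BiRing K m n),
    (∀ i, IsBihom K (F i) ((d i : ℤ), 0)) ∧
    (∀ j, IsBihom K (G j) (0, (d' j : ℤ))) ∧
    IsRegSeq (List.ofFn F ++ List.ofFn G) ∧
    Ideal.span (Set.range F ∪ Set.range G) = vIdealB K 𝕏

/-- `Y ⊆ P^N` is a complete intersection of type `(d_1,…,d_N)`. -/
def IsCI1 {N : ℕ} (Y : Finset (Fin (N+1) → K)) (d : Fin N → ℕ) : Prop :=
  ∃ F : Fin N → PRing K N,
    (∀ i, IsHom1 K (F i) (d i : ℤ)) ∧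
    IsRegSeq (List.ofFn F) ∧
    Ideal.span (Set.range F) = vIdeal1 K Y

/- ### Separators and the Cayley-Bacharach property -/

/-- `F` is a separator of `p` in `𝕏`. -/
def IsSepB (𝕏 : Finset (BiPt K m n)) (p : BiPt K m n) (F : BiRing K m n) : Prop :=
  evalB K p F ≠ 0 ∧ ∀ q ∈ 𝕏, q ≠ p → evalB K q F = 0

/-- The set of degrees of bihomogeneous separators of `p` in `𝕏`. -/
def sepDegsB (𝕏 : Finset (BiPt K m n)) (p : BiPt K m n) : Set (ℤ × ℤ) :=
  {d | ∃ F, IsBihom K F d ∧ IsSepB K 𝕏 p F}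

/-- `deg_𝕏(p)`: the set of degrees of minimal separators of `p` in `𝕏`
(mimimality w.r.t. the componentwise order). -/
def minSepDegsB (𝕏 : Finset (BiPt K m n)) (p : BiPt K m n) : Set (ℤ × ℤ) :=
  {d ∈ sepDegsB K 𝕏 p | ∀ d' ∈ sepDegsB K 𝕏 p, ¬ d' < d}

/-- `𝕏` has the Cayley-Bacharach property: the Hilbert function of
`𝕏 \ {p}` is independent of the choice of `p ∈ 𝕏`. -/
def HasCB (𝕏 : Finset (BiPt K m n)) : Prop :=
  ∀ p ∈ 𝕏, ∀ q ∈ 𝕏, ∀ d : ℤ × ℤ, HFB K (𝕏.erase p) d = HFB K (𝕏.erase q) d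

/- ### Star property and fibres -/

/-- The `(⋆)`-property. -/
def StarProp (𝕏 : Finset (BiPt K m n)) : Prop :=
  ∀ p ∈ 𝕏, ∀ q ∈ 𝕏, ((p.1, q.2) ∈ 𝕏 ∨ (q.1, p.2) ∈ 𝕏)

/-- `V_j = π₁(π₂⁻¹(q'_j) ∩ 𝕏)` for `q'_j = p.2`. -/
def Vset (𝕏 : Finset (BiPt K m n)) (p : BiPt K m n) : Finset (Fin (m+1) → K) :=
  (𝕏.filter fun q => q.2 = p.2).image Prod.fst

/-- `W_i = π₂(π₁⁻¹(q_i) ∩ 𝕏)` for `q_i = p.1`. -/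
def Wset (𝕏 : Finset (BiPt K m n)) (p : BiPt K m n) : Finset (Fin (n+1) → K) :=
  (𝕏.filter fun q => q.1 = p.1).image Prod.snd

end MultiProjPoints

namespace MultiProjPoints

section Aux

variable {F : Type} [Field F]

theorem aux_finrank_map_eq {V A B : Type*} [AddCommGroup V] [Module F V] [AddCommGroup A]
    [Module F A] [AddCommGroup B] [Module F B] (f : V →ₗ[F] A) (g : V →ₗ[F] B)
    (W : Submodule F V) (h : ∀ x ∈ W, f x = 0 ↔ g x = 0) :
    Module.finrank F (W.map f) = Module.finrank F (W.map g) := by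
  have hk : LinearMap.ker (f ∘ₗ W.subtype) = LinearMap.ker (g ∘ₗ W.subtype) := by
    ext x
    simpa using h x.1 x.2
  have h1 : W.map f = LinearMap.range (f ∘ₗ W.subtype) := by
    rw [LinearMap.range_comp, Submodule.range_subtype]
  have h2 : W.map g = LinearMap.range (g ∘ₗ W.subtype) := by
    rw [LinearMap.range_comp, Submodule.range_subtype]
  rw [h1, h2, ← (LinearMap.quotKerEquivRange (f ∘ₗ W.subtype)).finrank_eq,
    ← (LinearMap.quotKerEquivRange (g ∘ₗ W.subtype)).finrank_eq, hk]

/-- Simultaneous evaluation at a family of points. -/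
def evA {σ ι : Type*} (pts : ι → σ → F) : MvPolynomial σ F →ₐ[F] (ι → F) :=
  aeval (fun s i => pts i s)

theorem evA_apply {σ ι : Type*} (pts : ι → σ → F) (G : MvPolynomial σ F) (i : ι) :
    evA pts G i = eval (pts i) G := by
  have : (Pi.evalAlgHom F (fun _ : ι => F) i).comp (evA pts) = aeval (pts i) := by
    apply MvPolynomial.algHom_ext
    intro s
    simp [evA]
  have h2 := congrArg (fun f => f G) this
  simpa [MvPolynomial.aeval_eq_eval] using h2

theorem aux_finrank_quot {σ ι M : Type*} [AddCommMonoid M] (w : σ → M) (pts : ι → σ → F)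
    (I : Ideal (MvPolynomial σ F))
    (hI : I = Ideal.span {G | (∃ d, IsWeightedHomogeneous w G d) ∧ ∀ i, eval (pts i) G = 0})
    (d : M) :
    Module.finrank F ((weightedHomogeneousSubmodule F w d).map
      (Ideal.Quotient.mkₐ F I).toLinearMap) =
    Module.finrank F ((weightedHomogeneousSubmodule F w d).map (evA pts).toLinearMap) := by
  apply aux_finrank_map_eq
  intro x hx
  have hle : I ≤ RingHom.ker (evA pts) := by
    rw [hI, Ideal.span_le]
    rintro G ⟨-, hG⟩
    simp only [SetLike.mem_coe, RingHom.mem_ker]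
    funext i
    rw [evA_apply, hG i]; rfl
  simp only [AlgHom.toLinearMap_apply, Ideal.Quotient.mkₐ_eq_mk, Ideal.Quotient.eq_zero_iff_mem]
  constructor
  · intro h
    exact hle h
  · intro h
    rw [hI]
    apply Ideal.subset_span
    refine ⟨⟨d, hx⟩, fun i => ?_⟩
    rw [← evA_apply, h]; rfl

theorem aux_prod_mem {A α : Type*} [CommRing A] [Algebra F A] (s : Finset α) (x : α → A)
    (U : α → Submodule F A) (h : ∀ a ∈ s, x a ∈ U a) : ∏ a ∈ s, x a ∈ ∏ a ∈ s, U a := by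
  classical
  induction s using Finset.induction_on with
  | empty =>
    rw [Finset.prod_empty, Finset.prod_empty]
    exact Submodule.one_le.mp le_rfl
  | insert a s ha ih =>
    rw [Finset.prod_insert ha, Finset.prod_insert ha]
    exact Submodule.mul_mem_mul (h a (Finset.mem_insert_self _ _))
      (ih fun b hb => h b (Finset.mem_insert_of_mem hb))

theorem aux_fr_congr {V : Type*} [AddCommGroup V] [Module F V] {A B : Submodule F V}
    (h : A = B) : Module.finrank F A = Module.finrank F B := by rw [h]

theorem aux_prod_pow_mem {A α : Type*} [CommRing A] [Algebra F A] [Fintype α] (x : α → A)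
    (e : α → ℕ) : ∏ a, x a ^ e a ∈ (Submodule.span F (Set.range x)) ^ (∑ a, e a) := by
  rw [← Finset.prod_pow_eq_pow_sum]
  apply aux_prod_mem
  intro a _
  exact Submodule.pow_mem_pow _ (Submodule.subset_span (Set.mem_range_self a)) _

theorem aux_pow_le {σ M : Type*} [AddCommMonoid M] (w : σ → M) (e : M)
    (T : Submodule F (MvPolynomial σ F)) (hT : T ≤ weightedHomogeneousSubmodule F w e) (i : ℕ) :
    T ^ i ≤ weightedHomogeneousSubmodule F w (i • e) := by
  induction i with
  | zero =>
    rw [pow_zero, zero_smul, Submodule.one_le]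
    exact isWeightedHomogeneous_one F w
  | succ k ih =>
    rw [pow_succ, succ_nsmul]
    exact (mul_le_mul' ih hT).trans (weightedHomogeneousSubmodule_mul w _ _)

theorem aux_map_bi {m n : ℕ} {ι : Type*} (pts : ι → (Fin (m+1) ⊕ Fin (n+1)) → F) (i k : ℕ) :
    (weightedHomogeneousSubmodule F (biwt m n) ((i : ℤ), (k : ℤ))).map (evA pts).toLinearMap =
    (Submodule.span F (Set.range fun a : Fin (m+1) => fun j => pts j (Sum.inl a))) ^ i *
    (Submodule.span F (Set.range fun b : Fin (n+1) => fun j => pts j (Sum.inr b))) ^ k := by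
  apply le_antisymm
  · rintro _ ⟨G, hG, rfl⟩
    rw [AlgHom.toLinearMap_apply, G.as_sum, map_sum]
    apply Submodule.sum_mem
    intro e he
    have hw := hG (mem_support_iff.mp he)
    rw [evA, aeval_monomial, Algebra.algebraMap_eq_smul_one, smul_mul_assoc, one_mul]
    apply Submodule.smul_mem
    rw [Finsupp.prod_fintype _ _ (by simp), Fintype.prod_sum_type]
    have hw' : (∑ a, e (Sum.inl a)) = i ∧ (∑ b, e (Sum.inr b)) = k := by
      rw [Finsupp.weight_apply, Finsupp.sum_fintype _ _ (by simp), Fintype.sum_sum_type] at hw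
      simp only [biwt, Sum.elim_inl, Sum.elim_inr, Prod.ext_iff, Prod.fst_add, Prod.snd_add,
        Prod.fst_sum, Prod.snd_sum, Prod.smul_fst, Prod.smul_snd] at hw
      simp at hw
      exact_mod_cast hw
    rw [← hw'.1, ← hw'.2]
    exact Submodule.mul_mem_mul
      (aux_prod_pow_mem (fun a : Fin (m+1) => fun j => pts j (Sum.inl a)) _)
      (aux_prod_pow_mem (fun a : Fin (n+1) => fun j => pts j (Sum.inr a)) _)
  · have h1 := aux_pow_le (F := F) (biwt m n) (1, 0)
      (Submodule.span F (Set.range fun a : Fin (m+1) => X (Sum.inl a))) (by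
        rw [Submodule.span_le]
        rintro _ ⟨a, rfl⟩
        exact isWeightedHomogeneous_X F (biwt m n) (Sum.inl a)) i
    have h2 := aux_pow_le (F := F) (biwt m n) (0, 1)
      (Submodule.span F (Set.range fun a : Fin (n+1) => X (Sum.inr a))) (by
        rw [Submodule.span_le]
        rintro _ ⟨a, rfl⟩
        exact isWeightedHomogeneous_X F (biwt m n) (Sum.inr a)) k
    have h3 := (mul_le_mul' h1 h2).trans (weightedHomogeneousSubmodule_mul _ _ _)
    have h4 : i • ((1 : ℤ), (0 : ℤ)) + k • ((0 : ℤ), (1 : ℤ)) = ((i : ℤ), (k : ℤ)) := by simp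
    rw [h4] at h3
    refine le_trans (le_of_eq ?_) (Submodule.map_mono h3)
    rw [Submodule.map_mul, Submodule.map_pow, Submodule.map_pow, Submodule.map_span,
      Submodule.map_span, ← Set.range_comp, ← Set.range_comp]
    simp [Function.comp_def, evA]

theorem aux_map_one {N : ℕ} {ι : Type*} (pts : ι → Fin (N+1) → F) (i : ℕ) :
    (weightedHomogeneousSubmodule F (wt1 N) (i : ℤ)).map (evA pts).toLinearMap =
    (Submodule.span F (Set.range fun a : Fin (N+1) => fun j => pts j a)) ^ i := by
  apply le_antisymm
  · rintro _ ⟨G, hG, rfl⟩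
    rw [AlgHom.toLinearMap_apply, G.as_sum, map_sum]
    apply Submodule.sum_mem
    intro e he
    have hw := hG (mem_support_iff.mp he)
    rw [evA, aeval_monomial, Algebra.algebraMap_eq_smul_one, smul_mul_assoc, one_mul]
    apply Submodule.smul_mem
    rw [Finsupp.prod_fintype _ _ (by simp)]
    have hw' : (∑ a, e a) = i := by
      rw [Finsupp.weight_apply, Finsupp.sum_fintype _ _ (by simp)] at hw
      simp [wt1] at hw
      exact_mod_cast hw
    rw [← hw']
    exact aux_prod_pow_mem (fun a : Fin (N+1) => fun j => pts j a) _
  · have h1 := aux_pow_le (F := F) (wt1 N) 1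
      (Submodule.span F (Set.range fun a : Fin (N+1) => X a)) (by
        rw [Submodule.span_le]
        rintro _ ⟨a, rfl⟩
        exact isWeightedHomogeneous_X F (wt1 N) a) i
    have h4 : i • (1 : ℤ) = (i : ℤ) := by simp
    rw [h4] at h1
    refine le_trans (le_of_eq ?_) (Submodule.map_mono h1)
    rw [Submodule.map_pow, Submodule.map_span, ← Set.range_comp]
    simp [Function.comp_def, evA]

theorem aux_HF1_eq {N : ℕ} {ι : Type*} (pts : ι → Fin (N+1) → F) (Y : Finset (Fin (N+1) → F))
    (hY : ∀ q, q ∈ Y ↔ ∃ i, pts i = q) (i : ℕ) :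
    HF1 F Y (i : ℤ) = Module.finrank F
      ↥((Submodule.span F (Set.range fun a : Fin (N+1) => fun j => pts j a)) ^ i) := by
  rw [← aux_map_one, ← aux_finrank_quot (wt1 N) pts (vIdeal1 F Y)]
  · rfl
  · unfold vIdeal1 IsHom1
    congr 1
    ext G
    simp only [Set.mem_ofPred_eq, and_congr_right_iff]
    intro _
    constructor
    · intro h i
      exact h _ ((hY _).2 ⟨i, rfl⟩)
    · intro h q hq
      obtain ⟨i, rfl⟩ := (hY q).1 hq
      exact h i

theorem aux_HFB_eq {m n : ℕ} (Z : Finset (BiPt F m n)) (i k : ℕ) :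
    HFB F Z ((i : ℤ), (k : ℤ)) = Module.finrank F
      ↥((Submodule.span F (Set.range fun a : Fin (m+1) => fun j : Z => j.1.1 a)) ^ i *
        (Submodule.span F (Set.range fun a : Fin (n+1) => fun j : Z => j.1.2 a)) ^ k) := by
  have h := aux_map_bi (F := F) (fun j : Z => Sum.elim j.1.1 j.1.2) i k
  simp only [Sum.elim_inl, Sum.elim_inr] at h
  rw [← h, ← aux_finrank_quot (biwt m n) _ (vIdealB F Z)]
  · rfl
  · unfold vIdealB IsBihom evalB
    congr 1
    ext G
    simp

theorem aux_key {ι : Type*} [Finite ι] (U T : Submodule F (ι → F)) (l : ι → F) (hl : l ∈ U)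
    (hl0 : ∀ i, l i ≠ 0) : Module.finrank F ↥(Submodule.span F {l} * T) = Module.finrank F T ∧
    Submodule.span F {l} * T ≤ U * T := by
  constructor
  · have : Submodule.span F {l} * T = T.map (LinearMap.mulLeft F l) := by
      ext x
      simp [Submodule.mem_span_singleton_mul]
    rw [this]
    refine (LinearEquiv.finrank_eq (Submodule.equivMapOfInjective _ ?_ T)).symm
    intro a b hab
    funext i
    have := congrFun hab i
    simpa [hl0 i] using this
  · exact mul_le_mul' (by simpa using hl) le_rfl

theorem aux_step {ι : Type*} [Finite ι] (U T W : Submodule F (ι → F)) (l : ι → F) (hl : l ∈ U)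
    (hl0 : ∀ i, l i ≠ 0) (h : Module.finrank F T = Module.finrank F ↥(U * T)) :
    Module.finrank F ↥(W * T) = Module.finrank F ↥(U * (W * T)) := by
  obtain ⟨h1, h2⟩ := aux_key U T l hl hl0
  have h3 := Submodule.eq_of_le_of_finrank_eq h2 (h1.trans h)
  rw [mul_left_comm, ← h3, mul_left_comm, (aux_key U (W * T) l hl hl0).1]

theorem aux_sup {ι : Type*} [Finite ι] (U W : Submodule F (ι → F)) (l : ι → F) (hl : l ∈ U)
    (hl0 : ∀ i, l i ≠ 0) (N : ℕ)
    (hN : ∃ r, ∀ i, r ≤ i → Module.finrank F ↥(U ^ i) = N) :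
    (⨆ k : ℕ, sInf {i : ℕ | Module.finrank F ↥(U ^ i * W ^ k) =
      Module.finrank F ↥(U ^ (i + 1) * W ^ k)}) =
    sInf {r : ℕ | ∀ i : ℕ, r ≤ i → Module.finrank F ↥(U ^ i) = N} := by
  set S : ℕ → Set ℕ := fun k => {i : ℕ | Module.finrank F ↥(U ^ i * W ^ k) =
      Module.finrank F ↥(U ^ (i + 1) * W ^ k)} with hS
  have hmono : ∀ k, S 0 ⊆ S k := by
    intro k i hi
    change Module.finrank F ↥(U ^ i * W ^ 0) = Module.finrank F ↥(U ^ (i + 1) * W ^ 0) at hi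
    change Module.finrank F ↥(U ^ i * W ^ k) = Module.finrank F ↥(U ^ (i + 1) * W ^ k)
    rw [pow_zero, mul_one, mul_one, pow_succ'] at hi
    have := aux_step U (U ^ i) (W ^ k) l hl hl0 hi
    rw [mul_comm (U ^ i), this, pow_succ']
    exact aux_fr_congr (by rw [mul_assoc, mul_comm (W ^ k)])
  have h0 : S 0 = {r : ℕ | ∀ i : ℕ, r ≤ i → Module.finrank F ↥(U ^ i) = N} := by
    ext r
    change Module.finrank F ↥(U ^ r * W ^ 0) = Module.finrank F ↥(U ^ (r + 1) * W ^ 0) ↔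
      ∀ i : ℕ, r ≤ i → Module.finrank F ↥(U ^ i) = N
    rw [pow_zero, mul_one, mul_one]
    constructor
    · intro h
      have hs : ∀ j, Module.finrank F ↥(U ^ (r + j)) = Module.finrank F ↥(U ^ (r + j + 1)) := by
        intro j
        rw [pow_succ'] at h
        have := aux_step U (U ^ r) (U ^ j) l hl hl0 h
        rw [pow_succ', pow_add, mul_comm (U ^ r), this]
      have hc : ∀ j, Module.finrank F ↥(U ^ (r + j)) = Module.finrank F ↥(U ^ r) := by
        intro j
        induction j with
        | zero => rfl
        | succ j ih => rw [← add_assoc, ← hs j, ih]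
      obtain ⟨r0, hr0⟩ := hN
      intro i hi
      obtain ⟨j, rfl⟩ := Nat.exists_eq_add_of_le hi
      rw [hc j, ← hc r0]
      exact hr0 _ (by omega)
    · intro h
      rw [h r le_rfl, h (r + 1) (by omega)]
  have hne : (S 0).Nonempty := by rw [h0]; exact hN
  rw [← h0]
  apply le_antisymm
  · apply ciSup_le
    intro k
    exact Nat.sInf_le (hmono k (Nat.sInf_mem hne))
  · exact le_ciSup (f := fun k => sInf (S k))
      ⟨sInf (S 0), by rintro _ ⟨k, rfl⟩; exact Nat.sInf_le (hmono k (Nat.sInf_mem hne))⟩ 0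

theorem aux_dual_mem {N : ℕ} {ι : Type*} (pts : ι → Fin (N+1) → F)
    (f : Module.Dual F (Fin (N+1) → F)) :
    (fun j => f (pts j)) ∈ Submodule.span F (Set.range fun a : Fin (N+1) => fun j => pts j a) := by
  have : (fun j => f (pts j)) =
      ∑ a, f (Pi.single a 1) • (fun j => pts j a) := by
    funext j
    rw [LinearMap.pi_apply_eq_sum_univ f (pts j)]
    simp only [Finset.sum_apply, Pi.smul_apply, smul_eq_mul]
    refine Finset.sum_congr rfl fun a _ => ?_
    rw [mul_comm]
    congr 2
    funext b
    simp [Pi.single_apply, eq_comm]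
  rw [this]
  exact Submodule.sum_mem _ fun a _ => Submodule.smul_mem _ _ (Submodule.subset_span ⟨a, rfl⟩)

theorem aux_exists_l [CharZero F] {N : ℕ} {ι : Type*} [Finite ι] (pts : ι → Fin (N+1) → F)
    (h : ∀ i, pts i ≠ 0) :
    ∃ l ∈ Submodule.span F (Set.range fun a : Fin (N+1) => fun j => pts j a), ∀ i, l i ≠ 0 := by
  obtain ⟨f, hf⟩ := Module.exists_dual_forall_apply_ne_zero (K := F) pts h
  exact ⟨_, aux_dual_mem pts f, hf⟩

theorem aux_eventually [CharZero F] {N : ℕ} (Y : Finset (Fin (N+1) → F)) (hY : GoodSet F Y) :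
    ∃ r, ∀ i : ℕ, r ≤ i → HF1 F Y (i : ℤ) = Y.card := by
  classical
  obtain ⟨l, hl, hl0⟩ := aux_exists_l (fun j : Y => j.1) (fun j => hY.1 j.1 j.2)
  refine ⟨Y.card - 1, fun i hi => ?_⟩
  rw [aux_HF1_eq (fun j : Y => j.1) Y (by simp)]
  set U := Submodule.span F (Set.range fun a : Fin (N+1) => fun j : Y => j.1 a) with hU
  have hsep : ∀ q : Y, ∃ g ∈ U ^ (Y.card - 1), g q ≠ 0 ∧ ∀ q' : Y, q' ≠ q → g q' = 0 := by
    intro q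
    have hex : ∀ q' : Y, ∃ f ∈ U, q' ≠ q → f q ≠ 0 ∧ f q' = 0 := by
      intro q'
      by_cases hqq : q' = q
      · exact ⟨0, Submodule.zero_mem _, fun h => (h hqq).elim⟩
      have hn : q.1 ∉ Submodule.span F {q'.1} := by
        intro hm
        obtain ⟨c, hc⟩ := Submodule.mem_span_singleton.mp hm
        have hc0 : c ≠ 0 := by
          rintro rfl
          exact hY.1 q.1 q.2 (by rw [← hc, zero_smul])
        exact hqq (Subtype.ext (hY.2 q.1 q.2 q'.1 q'.2 ⟨c, hc0, hc.symm⟩).symm)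
      obtain ⟨f, hf, hk⟩ := Submodule.exists_le_ker_of_notMem hn
      exact ⟨_, aux_dual_mem (fun j : Y => j.1) f, fun _ =>
        ⟨hf, hk (Submodule.mem_span_singleton_self _)⟩⟩
    choose f hf hfq using hex
    refine ⟨∏ q' ∈ Finset.univ.erase q, f q', ?_, ?_, ?_⟩
    · have h1 : U ^ (Y.card - 1) = ∏ q' ∈ (Finset.univ : Finset Y).erase q, U := by
        rw [Finset.prod_const, Finset.card_erase_of_mem (Finset.mem_univ _), Finset.card_univ,
          Fintype.card_coe]
      rw [h1]
      exact aux_prod_mem _ _ _ fun q' _ => hf q'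
    · rw [Finset.prod_apply, Finset.prod_ne_zero_iff]
      intro q' hq'
      exact (hfq q' (Finset.ne_of_mem_erase hq')).1
    · intro q' hq'
      rw [Finset.prod_apply]
      exact Finset.prod_eq_zero (Finset.mem_erase.2 ⟨hq', Finset.mem_univ _⟩) (hfq q' hq').2
  have htop : U ^ (Y.card - 1) = ⊤ := by
    rw [eq_top_iff]
    intro x _
    choose g hg hgq hgz using hsep
    have : x = ∑ q, (x q / g q q) • g q := by
      funext j
      rw [Finset.sum_apply, Finset.sum_eq_single j]
      · simp [hgq j]
      · intro b _ hb
        simp [hgz b j hb.symm]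
      · simp
    rw [this]
    exact Submodule.sum_mem _ fun q _ => Submodule.smul_mem _ _ (hg q)
  obtain ⟨j, rfl⟩ := Nat.exists_eq_add_of_le hi
  have hle : ∀ j, Y.card ≤ Module.finrank F ↥(U ^ (Y.card - 1 + j)) := by
    intro j
    induction j with
    | zero => rw [add_zero, htop, finrank_top]; simp
    | succ j ih =>
      obtain ⟨h1, h2⟩ := aux_key U (U ^ (Y.card - 1 + j)) l hl hl0
      rw [← add_assoc, pow_succ']
      exact ih.trans (h1 ▸ Submodule.finrank_mono h2)
  refine le_antisymm ?_ (hle j)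
  refine (Submodule.finrank_le _).trans ?_
  simp

end Aux

end MultiProjPoints


open MultiProjPoints in
/-- Lemma 2.5: stabilization of the Hilbert function of a
finite set of points in `P^m × P^n`, and identification of `(ν, ϱ)` with the
regularity indices `(r_{𝕏₁}, r_{𝕏₂})`. -/
theorem statement_1 (K : Type) [Field K] [CharZero K] [DecidableEq K]
    (m n : ℕ) (𝕏 : Finset (BiPt K m n)) (hgood : GoodConfig K 𝕏)
    (hne : 𝕏.Nonempty) :
    (∀ i k : ℕ, HFB K 𝕏 ((i : ℤ), (k : ℤ)) = HFB K 𝕏 ((i : ℤ) + 1, (k : ℤ)) →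
        HFB K 𝕏 ((i : ℤ), (k : ℤ) + 1) = HFB K 𝕏 ((i : ℤ) + 1, (k : ℤ) + 1)) ∧
    (∀ l j : ℕ, HFB K 𝕏 ((l : ℤ), (j : ℤ)) = HFB K 𝕏 ((l : ℤ), (j : ℤ) + 1) →
        HFB K 𝕏 ((l : ℤ) + 1, (j : ℤ)) = HFB K 𝕏 ((l : ℤ) + 1, (j : ℤ) + 1)) ∧
    (⨆ k : ℕ, sInf {i : ℕ |
        HFB K 𝕏 ((i : ℤ), (k : ℤ)) = HFB K 𝕏 ((i : ℤ) + 1, (k : ℤ))}) =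
      regIndex1 K (𝕏.image Prod.fst) ∧
    (⨆ l : ℕ, sInf {j : ℕ |
        HFB K 𝕏 ((l : ℤ), (j : ℤ)) = HFB K 𝕏 ((l : ℤ), (j : ℤ) + 1)}) =
      regIndex1 K (𝕏.image Prod.snd) := by
  obtain ⟨h0, hg1, hg2⟩ := hgood
  obtain ⟨l, hl, hl0⟩ := aux_exists_l (fun j : 𝕏 => j.1.1) (fun j => (h0 j.1 j.2).1)
  obtain ⟨l', hl', hl0'⟩ := aux_exists_l (fun j : 𝕏 => j.1.2) (fun j => (h0 j.1 j.2).2)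
  have e1 : ∀ i : ℕ, (i : ℤ) + 1 = ((i + 1 : ℕ) : ℤ) := fun i => by push_cast; rfl
  have y1 : GoodSet K (𝕏.image Prod.fst) := by
    constructor
    · intro q hq
      obtain ⟨p, hp, rfl⟩ := Finset.mem_image.1 hq
      exact (h0 p hp).1
    · intro p hp' q hq' hc
      obtain ⟨p, hp, rfl⟩ := Finset.mem_image.1 hp'
      obtain ⟨q, hq, rfl⟩ := Finset.mem_image.1 hq'
      exact hg1 p hp q hq hc
  have y2 : GoodSet K (𝕏.image Prod.snd) := by
    constructor
    · intro q hq
      obtain ⟨p, hp, rfl⟩ := Finset.mem_image.1 hq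
      exact (h0 p hp).2
    · intro p hp' q hq' hc
      obtain ⟨p, hp, rfl⟩ := Finset.mem_image.1 hp'
      obtain ⟨q, hq, rfl⟩ := Finset.mem_image.1 hq'
      exact hg2 p hp q hq hc
  have v1 := aux_eventually _ y1
  have v2 := aux_eventually _ y2
  have f1 := aux_HF1_eq (fun j : 𝕏 => j.1.1) (𝕏.image Prod.fst) (by simp)
  have f2 := aux_HF1_eq (fun j : 𝕏 => j.1.2) (𝕏.image Prod.snd) (by simp)
  unfold regIndex1
  simp only [f1] at v1 ⊢
  simp only [f2] at v2 ⊢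
  simp only [e1, aux_HFB_eq]
  set U := Submodule.span K (Set.range fun a : Fin (m+1) => fun j : 𝕏 => j.1.1 a) with hU
  set W := Submodule.span K (Set.range fun a : Fin (n+1) => fun j : 𝕏 => j.1.2 a) with hW
  refine ⟨?_, ?_, aux_sup U W l hl hl0 _ v1, ?_⟩
  · intro i k h
    rw [pow_succ', mul_assoc] at h
    have := aux_step U _ W l hl hl0 h
    rw [pow_succ' W, mul_left_comm, this, pow_succ' U]
    exact aux_fr_congr (by ring)
  · intro i k h
    rw [pow_succ' W, mul_left_comm] at h
    have := aux_step W _ U l' hl' hl0' h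
    rw [pow_succ' U, mul_assoc, this, pow_succ' W]
    exact aux_fr_congr (by ring)
  · have := aux_sup W U l' hl' hl0' _ v2
    rw [← this]
    refine congrArg _ (funext fun k => congrArg _ (Set.ext fun i => ?_))
    change Module.finrank K ↥(U ^ k * W ^ i) = Module.finrank K ↥(U ^ k * W ^ (i + 1)) ↔
      Module.finrank K ↥(W ^ i * U ^ k) = Module.finrank K ↥(W ^ (i + 1) * U ^ k)
    rw [mul_comm (U ^ k), mul_comm (U ^ k)]
end
end

section
/- Let X = {p_1,...,p_s} be an ACM set of s distinct points in P^m × P^n. There is an exact sequence of bigraded R_X-modules 0 → R_X dx_0 ⊕ R_X dy_0 → Ω^1_{R_X/K} → Ω^1_{R_X/R_o} → 0, where the second map sends g·df to g·d_{R_X/R_o} f. In particular, for all (i,j) ∈ N^2, HF_{Ω^1_{R_X/R_o}}(i,j) = m·HF_X(i−1,j) + n·HF_X(i,j−1) + HF_X(i,j) − HF_Y(i,j), where Y is the subscheme of P^m × P^n defined by I_Y = I_{p_1}^2 ∩ ... ∩ I_{p_s}^2. -/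
/- Common setup: finite sets of points in the multiprojective space
   `P^m x P^n` over a field `K` of characteristic zero, their bihomogeneous
   vanishing ideals, bigraded Hilbert functions, Kähler differents,
   separators, Cayley-Bacharach property and complete intersections. -/

open MvPolynomial

set_option maxHeartbeats 1000000
set_option synthInstance.maxHeartbeats 400000

noncomputable section

namespace MultiProjPoints

variable (K : Type) [Field K] [CharZero K] [DecidableEq K] {m n : ℕ}

/-- The ideal `I_𝕐 = I_{p_1}² ∩ ⋯ ∩ I_{p_s}²` of the double-point scheme. -/
def dblIdeal (𝕏 : Finset (BiPt K m n)) : Ideal (BiRing K m n) :=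
  ⨅ p ∈ 𝕏, (ptIdealB K p) ^ 2

/-- The subalgebra `R_o = K[x₀, y₀]` of `R_𝕏 = S/I`. -/
def Ro (I : Ideal (BiRing K m n)) : Subalgebra K (BiRing K m n ⧸ I) :=
  Algebra.adjoin K {x0B K I, y0B K I}

/-- The degree-`d` piece of the bigraded module `Ω¹_{R_𝕏/R_o}`:
the `K`-span of the elements `f · d g` with `f, g` bihomogeneous of degrees
adding up to `d`. -/
def omegaRelPiece (I : Ideal (BiRing K m n)) (d : ℤ × ℤ) :
    Submodule K (KaehlerDifferential (↥(Ro K I)) (BiRing K m n ⧸ I)) :=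
  Submodule.span K {ω | ∃ d₁ d₂ : ℤ × ℤ, d₁ + d₂ = d ∧
    ∃ f ∈ degPieceB K I d₁, ∃ g ∈ degPieceB K I d₂,
      ω = f • (KaehlerDifferential.D (↥(Ro K I)) (BiRing K m n ⧸ I)) g}

/-- The Hilbert function of the bigraded module `Ω¹_{R_𝕏/R_o}`. -/
def HFOmegaRel (I : Ideal (BiRing K m n)) (d : ℤ × ℤ) : ℕ :=
  Module.finrank K (omegaRelPiece K I d)

end MultiProjPoints

namespace MPPaux

open MvPolynomial MultiProjPoints

section general

variable {K : Type} [Field K] {σ : Type} (I : Ideal (MvPolynomial σ K))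

/-- Descend a derivation killing `I` to the quotient. -/
theorem exists_der {M : Type} [AddCommGroup M] [Module (MvPolynomial σ K ⧸ I) M] [Module K M]
    [IsScalarTower K (MvPolynomial σ K ⧸ I) M]
    (D : MvPolynomial σ K →ₗ[K] M)
    (hL : ∀ F G, D (F * G) = Ideal.Quotient.mk I F • D G + Ideal.Quotient.mk I G • D F)
    (hI : ∀ F ∈ I, D F = 0) :
    ∃ δ : Derivation K (MvPolynomial σ K ⧸ I) M, ∀ F, δ (Ideal.Quotient.mk I F) = D F := by
  have hs := Ideal.Quotient.mk_surjective (I := I)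
  choose g hg using hs
  have key : ∀ F, D (g (Ideal.Quotient.mk I F)) = D F := by
    intro F
    rw [← sub_eq_zero, ← map_sub]
    apply hI
    rw [← Ideal.Quotient.eq, hg]
  let δ : (MvPolynomial σ K ⧸ I) →ₗ[K] M :=
    { toFun := fun r => D (g r)
      map_add' := by
        intro a b
        obtain ⟨a, rfl⟩ := Ideal.Quotient.mk_surjective a
        obtain ⟨b, rfl⟩ := Ideal.Quotient.mk_surjective b
        rw [← map_add, key, key, key, map_add]
      map_smul' := by
        intro c a
        obtain ⟨a, rfl⟩ := Ideal.Quotient.mk_surjective a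
        have : c • (Ideal.Quotient.mk I a) = Ideal.Quotient.mk I (c • a) := rfl
        rw [this, key, key, map_smul]; rfl }
  refine ⟨Derivation.mk' δ ?_, fun F => key F⟩
  intro a b
  obtain ⟨a, rfl⟩ := Ideal.Quotient.mk_surjective a
  obtain ⟨b, rfl⟩ := Ideal.Quotient.mk_surjective b
  change D (g _) = _ • D (g _) + _ • D (g _)
  rw [← map_mul, key, key, key, hL]

theorem D_mk {A : Type} [CommRing A] [Algebra A (MvPolynomial σ K ⧸ I)] [Algebra K A]
    [IsScalarTower K A (MvPolynomial σ K ⧸ I)] [Fintype σ]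
    {M : Type} [AddCommGroup M] [Module (MvPolynomial σ K ⧸ I) M] [Module A M]
    (D : Derivation A (MvPolynomial σ K ⧸ I) M) (F : MvPolynomial σ K) :
    D (Ideal.Quotient.mk I F) =
      ∑ v, Ideal.Quotient.mk I (pderiv v F) • D (Ideal.Quotient.mk I (X v)) := by
  have hz : ∀ x : M, (0 : MvPolynomial σ K ⧸ I) • x = 0 := by
    intro x
    have h := add_smul (0 : MvPolynomial σ K ⧸ I) 0 x
    rw [add_zero] at h
    exact left_eq_add.mp h
  induction F using MvPolynomial.induction_on with
  | C a =>
    have : Ideal.Quotient.mk I (C a) = algebraMap A (MvPolynomial σ K ⧸ I) (algebraMap K A a) := by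
      rw [← IsScalarTower.algebraMap_apply]; rfl
    rw [this, Derivation.map_algebraMap]
    simp [hz]
  | add p q hp hq =>
    rw [map_add, map_add, hp, hq, ← Finset.sum_add_distrib]
    simp [add_smul]
  | mul_X p i hp =>
    classical
    rw [map_mul, Derivation.leibniz, hp, Finset.smul_sum]
    have : ∀ v, Ideal.Quotient.mk I (pderiv v (p * X i)) =
        (if i = v then Ideal.Quotient.mk I p else 0) +
          Ideal.Quotient.mk I (X i) * Ideal.Quotient.mk I (pderiv v p) := by
      intro v
      rw [Derivation.leibniz, pderiv_X]
      by_cases h : i = v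
      · subst h; simp
      · simp [h]
    simp only [this, add_smul, Finset.sum_add_distrib, mul_smul, ite_smul, hz]
    simp

/-- First order Taylor expansion. -/
theorem taylor {A : Type} [CommRing A] [Algebra K A] [Fintype σ] (J : Ideal A) (a b : σ → A)
    (hb : ∀ v, b v ∈ J) (F : MvPolynomial σ K) :
    aeval (fun v => a v + b v) F - aeval a F - ∑ v, b v * aeval a (pderiv v F) ∈ J ^ 2 := by
  induction F using MvPolynomial.induction_on with
  | C c => simp
  | add p q hp hq =>
    convert Ideal.add_mem _ hp hq using 1
    simp only [map_add, mul_add, Finset.sum_add_distrib]; ring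
  | mul_X p i hp =>
    classical
    have h1 : ∑ v, b v * aeval a (pderiv v p) ∈ J :=
      Ideal.sum_mem _ fun v _ => J.mul_mem_right _ (hb v)
    have h2 : (∑ v, b v * aeval a (pderiv v p)) * b i ∈ J ^ 2 := by
      rw [pow_two]; exact Ideal.mul_mem_mul h1 (hb i)
    have h3 : ∑ v, b v * aeval a (pderiv v (p * X i)) =
        b i * aeval a p + a i * ∑ v, b v * aeval a (pderiv v p) := by
      have : ∀ v, b v * aeval a (pderiv v (p * X i)) =
          (if i = v then b v * aeval a p else 0) + a i * (b v * aeval a (pderiv v p)) := by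
        intro v
        rw [Derivation.leibniz, pderiv_X]
        by_cases h : i = v
        · subst h; simp; ring
        · simp [h]; ring
      simp only [this, Finset.sum_add_distrib, ← Finset.mul_sum]
      simp
    convert Ideal.add_mem _ (Ideal.mul_mem_right (a i + b i) _ hp) h2 using 1
    rw [h3]; simp only [map_mul, aeval_X]; ring

theorem aeval_X_self (F : MvPolynomial σ K) : aeval X F = F := by simp

theorem pderiv_sq (J : Ideal (MvPolynomial σ K)) (F : MvPolynomial σ K) (hF : F ∈ J ^ 2) (v : σ) :
    pderiv v F ∈ J := by
  rw [pow_two] at hF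
  refine Submodule.mul_induction_on hF ?_ ?_
  · intro a ha b hb
    rw [Derivation.leibniz]
    exact J.add_mem (J.mul_mem_right _ ha) (J.mul_mem_right _ hb)
  · intro a b ha hb
    rw [map_add]; exact J.add_mem ha hb

end general

section bi

variable {K : Type} [Field K] {m n : ℕ}

theorem weight_fst (e : (Fin (m+1) ⊕ Fin (n+1)) →₀ ℕ) :
    Finsupp.weight (biwt m n) e = ((∑ i, (e (Sum.inl i) : ℤ)), (∑ i, (e (Sum.inr i) : ℤ))) := by
  rw [Finsupp.weight_apply, Finsupp.sum_fintype _ _ (by simp)]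
  simp [biwt, Fintype.sum_sum_type, Prod.ext_iff, Prod.fst_sum, Prod.snd_sum]

theorem aeval_bihom {A : Type} [CommRing A] [Algebra K A] (s t : A) (p : BiPt K m n)
    {F : BiRing K m n} {d : ℤ × ℤ} (hF : IsBihom K F d) :
    aeval (Sum.elim (fun i => s * algebraMap K A (p.1 i)) (fun i => t * algebraMap K A (p.2 i))) F =
      s ^ d.1.toNat * t ^ d.2.toNat * algebraMap K A (evalB K p F) := by
  have hsum := F.support_sum_monomial_coeff
  conv_lhs => rw [← hsum]
  unfold evalB
  conv_rhs => rw [← hsum]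
  rw [map_sum, map_sum, map_sum, Finset.mul_sum]
  refine Finset.sum_congr rfl fun e he => ?_
  have hw := hF (mem_support_iff.mp he)
  rw [weight_fst] at hw
  have h1 : d.1.toNat = ∑ i, e (Sum.inl i) := by
    rw [← hw]; simp only [← Nat.cast_sum, Int.toNat_natCast]
  have h2 : d.2.toNat = ∑ i, e (Sum.inr i) := by
    rw [← hw]; simp only [← Nat.cast_sum, Int.toNat_natCast]
  rw [h1, h2, aeval_monomial, eval_monomial, Finsupp.prod_fintype _ _ (by simp),
    Finsupp.prod_fintype _ _ (by simp)]
  simp only [Fintype.prod_sum_type, Sum.elim_inl, Sum.elim_inr, mul_pow, Finset.prod_mul_distrib,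
    Finset.prod_pow_eq_pow_sum, map_mul, map_prod, map_pow]
  ring

theorem fd (d : ℤ × ℤ) : Module.Finite K
    (weightedHomogeneousSubmodule K (biwt m n) d) := by
  have hle : weightedHomogeneousSubmodule K (biwt m n) d ≤
      restrictTotalDegree _ K (d.1.toNat + d.2.toNat) := by
    intro F hF
    rw [mem_restrictTotalDegree, totalDegree, Finset.sup_le_iff]
    intro e he
    have hw := hF (mem_support_iff.mp he)
    rw [weight_fst] at hw
    have h1 : d.1.toNat = ∑ i, e (Sum.inl i) := by
      rw [← hw]; simp only [← Nat.cast_sum, Int.toNat_natCast]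
    have h2 : d.2.toNat = ∑ i, e (Sum.inr i) := by
      rw [← hw]; simp only [← Nat.cast_sum, Int.toNat_natCast]
    rw [h1, h2, Finsupp.sum_fintype _ _ (by simp), Fintype.sum_sum_type]
  exact Submodule.finiteDimensional_of_le hle

theorem homog (𝕏 : Finset (BiPt K m n)) {F : BiRing K m n} (hF : F ∈ vIdealB K 𝕏) (d : ℤ × ℤ) :
    weightedHomogeneousComponent (biwt m n) d F ∈ vIdealB K 𝕏 := by
  classical
  let _ := MvPolynomial.weightedGradedAlgebra K (biwt m n)
  refine weightedHomogeneousComponent_mem_of_mem K (biwt m n) ?_ hF d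
  apply Ideal.homogeneous_span
  rintro x ⟨⟨d, hd⟩, -⟩
  exact ⟨d, hd⟩

theorem homog' (𝕏 : Finset (BiPt K m n)) {F : BiRing K m n}
    (h : ∀ d, weightedHomogeneousComponent (biwt m n) d F ∈ vIdealB K 𝕏) : F ∈ vIdealB K 𝕏 := by
  rw [← finsum_weightedHomogeneousComponent (biwt m n) F]
  rw [finsum_eq_sum _ (weightedHomogeneousComponent_finsupp F)]
  exact Ideal.sum_mem _ fun d _ => h d

theorem vanish {𝕏 : Finset (BiPt K m n)} {F : BiRing K m n} (hF : F ∈ vIdealB K 𝕏)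
    {p : BiPt K m n} (hp : p ∈ 𝕏) : evalB K p F = 0 := by
  have : vIdealB K 𝕏 ≤ RingHom.ker (eval (Sum.elim p.1 p.2)) := by
    refine Ideal.span_le.mpr ?_
    rintro G ⟨-, hG⟩
    exact hG p hp
  exact this hF

theorem mem_of_vanish {𝕏 : Finset (BiPt K m n)} {F : BiRing K m n} {d : ℤ × ℤ}
    (hF : IsBihom K F d) (h : ∀ p ∈ 𝕏, evalB K p F = 0) : F ∈ vIdealB K 𝕏 :=
  Ideal.subset_span ⟨⟨d, hF⟩, h⟩

theorem pt_le (p : BiPt K m n) : ptIdealB K p ≤ RingHom.ker (eval (Sum.elim p.1 p.2)) := by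
  refine Ideal.span_le.mpr ?_
  rintro G ⟨-, hG⟩
  exact hG

theorem pderiv_bihom {F : BiRing K m n} {d : ℤ × ℤ} (hF : IsBihom K F d)
    (v : Fin (m+1) ⊕ Fin (n+1)) : IsBihom K (pderiv v F) (d - biwt m n v) :=
  IsWeightedHomogeneous.pderiv hF (by simp)

theorem pderiv_comp (F : BiRing K m n) (d : ℤ × ℤ) (v : Fin (m+1) ⊕ Fin (n+1)) :
    pderiv v (weightedHomogeneousComponent (biwt m n) d F) =
      weightedHomogeneousComponent (biwt m n) (d - biwt m n v) (pderiv v F) := by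
  classical
  ext e
  rw [coeff_pderiv, coeff_weightedHomogeneousComponent, coeff_weightedHomogeneousComponent,
    coeff_pderiv]
  have : Finsupp.weight (biwt m n) (e + Finsupp.single v 1) =
      Finsupp.weight (biwt m n) e + biwt m n v := by
    rw [map_add, Finsupp.weight_single]; simp
  rw [this]
  by_cases h : Finsupp.weight (biwt m n) e + biwt m n v = d
  · rw [if_pos h, if_pos (by rw [← h]; simp)]
  · rw [if_neg h, if_neg (by intro h'; apply h; rw [h']; simp)]; simp

end bi

end MPPaux
namespace MPPaux

open MvPolynomial MultiProjPoints

section two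

variable {K : Type} [Field K] {m n : ℕ}

theorem bihom_X (v : Fin (m+1) ⊕ Fin (n+1)) : IsBihom K (X v : BiRing K m n) (biwt m n v) :=
  isWeightedHomogeneous_X K (biwt m n) v

theorem lin_sep {N : ℕ} {p q : Fin (N+1) → K} (hp : p ≠ 0) (hq : q ≠ 0) (hpq : p ≠ q)
    (h : (∃ c : K, c ≠ 0 ∧ p = c • q) → p = q) : ∃ i j, q j * p i - q i * p j ≠ 0 := by
  by_contra hcon
  push Not at hcon
  obtain ⟨j, hj⟩ := Function.ne_iff.mp hq
  apply hpq
  apply h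
  have hj' : q j ≠ 0 := hj
  have hpe : p = (p j / q j) • q := by
    ext i
    have := hcon i j
    simp only [Pi.smul_apply, smul_eq_mul]
    field_simp
    linear_combination this
  refine ⟨p j / q j, ?_, hpe⟩
  intro h0
  apply hp
  rw [hpe, h0, zero_smul]

theorem pair_sep (𝕏 : Finset (BiPt K m n)) (hgood : GoodConfig K 𝕏) {p q : BiPt K m n}
    (hp : p ∈ 𝕏) (hq : q ∈ 𝕏) (hpq : q ≠ p) :
    ∃ F : BiRing K m n, (∃ d, IsBihom K F d) ∧ evalB K p F ≠ 0 ∧ evalB K q F = 0 := by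
  by_cases h1 : p.1 = q.1
  · have h2 : p.2 ≠ q.2 := fun h2 => hpq (Prod.ext h1.symm h2.symm)
    obtain ⟨i, j, hij⟩ := lin_sep (hgood.1 p hp).2 (hgood.1 q hq).2 h2 (hgood.2.2 p hp q hq)
    refine ⟨C (q.2 j) * X (Sum.inr i) - C (q.2 i) * X (Sum.inr j), ⟨(0, 1), ?_⟩, ?_, ?_⟩
    · exact ((bihom_X (Sum.inr i)).C_mul _).sub ((bihom_X (Sum.inr j)).C_mul _)
    · simpa [evalB] using hij
    · simp [evalB]; ring
  · obtain ⟨i, j, hij⟩ := lin_sep (hgood.1 p hp).1 (hgood.1 q hq).1 h1 (hgood.2.1 p hp q hq)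
    refine ⟨C (q.1 j) * X (Sum.inl i) - C (q.1 i) * X (Sum.inl j), ⟨(1, 0), ?_⟩, ?_, ?_⟩
    · exact ((bihom_X (Sum.inl i)).C_mul _).sub ((bihom_X (Sum.inl j)).C_mul _)
    · simpa [evalB] using hij
    · simp [evalB]; ring

theorem sep (𝕏 : Finset (BiPt K m n)) (hgood : GoodConfig K 𝕏) {p : BiPt K m n}
    (hp : p ∈ 𝕏) :
    ∃ F : BiRing K m n, (∃ d, IsBihom K F d) ∧ evalB K p F ≠ 0 ∧
      ∀ q ∈ 𝕏, q ≠ p → evalB K q F = 0 := by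
  classical
  have h : ∀ q : BiPt K m n, ∃ F : BiRing K m n, (∃ d, IsBihom K F d) ∧ evalB K p F ≠ 0 ∧
      (q ∈ 𝕏 → q ≠ p → evalB K q F = 0) := by
    intro q
    by_cases hq : q ∈ 𝕏 ∧ q ≠ p
    · obtain ⟨F, h1, h2, h3⟩ := pair_sep 𝕏 hgood hp hq.1 hq.2
      exact ⟨F, h1, h2, fun _ _ => h3⟩
    · refine ⟨1, ⟨0, isWeightedHomogeneous_one K _⟩, by simp [evalB], fun a b => absurd ⟨a, b⟩ hq⟩
  choose F hd hF1 hF2 using h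
  choose d hd using hd
  refine ⟨∏ q ∈ 𝕏, F q, ⟨∑ q ∈ 𝕏, d q, ?_⟩, ?_, ?_⟩
  · exact IsWeightedHomogeneous.prod _ _ _ fun q _ => hd q
  · simp only [evalB, map_prod]
    exact Finset.prod_ne_zero_iff.mpr fun q _ => hF1 q
  · intro q hq hne
    simp only [evalB, map_prod]
    exact Finset.prod_eq_zero hq (hF2 q hq hne)

theorem nzd_ne (𝕏 : Finset (BiPt K m n)) (hgood : GoodConfig K 𝕏) (v : Fin (m+1) ⊕ Fin (n+1))
    (hv : ∀ z, Ideal.Quotient.mk (vIdealB K 𝕏) (X v) * z = 0 → z = 0)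
    {p : BiPt K m n} (hp : p ∈ 𝕏) : evalB K p (X v) ≠ 0 := by
  intro h0
  obtain ⟨F, ⟨d, hd⟩, h1, h2⟩ := sep 𝕏 hgood hp
  apply h1
  have : Ideal.Quotient.mk (vIdealB K 𝕏) F = 0 := by
    apply hv
    rw [← map_mul, Ideal.Quotient.eq_zero_iff_mem]
    refine mem_of_vanish (IsWeightedHomogeneous.mul (bihom_X v) hd) ?_
    intro q hq
    have hm : evalB K q (X v * F) = evalB K q (X v) * evalB K q F := by simp [evalB]
    rw [hm]
    by_cases hqp : q = p
    · subst hqp; rw [h0, zero_mul]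
    · rw [h2 q hq hqp, mul_zero]
  exact vanish (Ideal.Quotient.eq_zero_iff_mem.mp this) hp

theorem comp_pow (Z : BiRing K m n) (d : ℤ × ℤ) (N : ℕ) (hN : d.1 < N) :
    weightedHomogeneousComponent (biwt m n) d (X (Sum.inl 0) ^ N * Z) = 0 := by
  classical
  ext e
  rw [coeff_weightedHomogeneousComponent, X_pow_eq_monomial, coeff_monomial_mul']
  split_ifs with h1 h2
  · exfalso
    have h3 := h2 (Sum.inl 0)
    rw [Finsupp.single_eq_same] at h3
    rw [weight_fst] at h1
    rw [← h1] at hN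
    have h4 : (e (Sum.inl 0) : ℤ) ≤ ∑ i, (e (Sum.inl i) : ℤ) :=
      Finset.single_le_sum (f := fun i => (e (Sum.inl i) : ℤ)) (fun i _ => by positivity)
        (Finset.mem_univ 0)
    have h5 : (N : ℤ) ≤ e (Sum.inl 0) := by exact_mod_cast h3
    simp only at hN
    omega
  · simp
  · simp

theorem y0_reg (𝕏 : Finset (BiPt K m n)) (h : ACMxy K 𝕏) (z : BiRing K m n ⧸ vIdealB K 𝕏)
    (hz : y0B K (vIdealB K 𝕏) * z = 0) : z = 0 := by
  obtain ⟨hx, hy⟩ := h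
  have key : ∀ N : ℕ, ∃ z', z = x0B K (vIdealB K 𝕏) ^ N * z' ∧ y0B K (vIdealB K 𝕏) * z' = 0 := by
    intro N
    induction N with
    | zero => exact ⟨z, by simp, hz⟩
    | succ N ih =>
      obtain ⟨z', h1, h2⟩ := ih
      have := hy z' (by rw [h2]; exact Ideal.zero_mem _)
      obtain ⟨w, hw⟩ := Ideal.mem_span_singleton'.mp this
      refine ⟨w, by rw [h1, ← hw]; ring, hx _ ?_⟩
      rw [← h2, ← hw]; ring
  obtain ⟨Z, rfl⟩ := Ideal.Quotient.mk_surjective z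
  rw [Ideal.Quotient.eq_zero_iff_mem]
  apply homog'
  intro d
  obtain ⟨z', h1, -⟩ := key (d.1.toNat + 1)
  obtain ⟨Z', rfl⟩ := Ideal.Quotient.mk_surjective z'
  rw [x0B, ← map_pow, ← map_mul, Ideal.Quotient.eq] at h1
  have := homog 𝕏 h1 d
  rwa [map_sub, comp_pow _ _ _ (by push_cast; omega), sub_zero] at this

theorem euler (a b : ℕ) {F : BiRing K m n} {d : ℤ × ℤ} (hF : IsBihom K F d) :
    ∑ v, (Sum.elim (fun _ => a) (fun _ => b) : Fin (m+1) ⊕ Fin (n+1) → ℕ) v • (X v * pderiv v F) =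
      (a * d.1.toNat + b * d.2.toNat) • F := by
  apply IsWeightedHomogeneous.sum_weight_X_mul_pderiv
  intro e he
  have hw := hF he
  rw [weight_fst] at hw
  have h1 : d.1.toNat = ∑ i, e (Sum.inl i) := by
    rw [← hw]; simp only [← Nat.cast_sum, Int.toNat_natCast]
  have h2 : d.2.toNat = ∑ i, e (Sum.inr i) := by
    rw [← hw]; simp only [← Nat.cast_sum, Int.toNat_natCast]
  rw [h1, h2, Finsupp.weight_apply, Finsupp.sum_fintype _ _ (by simp)]
  simp [Fintype.sum_sum_type, Finset.mul_sum, mul_comm]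

theorem euler_der (𝕏 : Finset (BiPt K m n)) (a b : ℕ) :
    ∃ δ : Derivation K (BiRing K m n ⧸ vIdealB K 𝕏) (BiRing K m n ⧸ vIdealB K 𝕏),
      δ (x0B K (vIdealB K 𝕏)) = a * x0B K (vIdealB K 𝕏) ∧
      δ (y0B K (vIdealB K 𝕏)) = b * y0B K (vIdealB K 𝕏) := by
  set w : Fin (m+1) ⊕ Fin (n+1) → ℕ := Sum.elim (fun _ => a) (fun _ => b) with hw
  let E : Derivation K (BiRing K m n) (BiRing K m n) :=
    mkDerivation K fun v => (w v : BiRing K m n) * X v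
  have hE : ∀ F, E F = ∑ v, w v • (X v * pderiv v F) := by
    intro F
    let E' : Derivation K (BiRing K m n) (BiRing K m n) :=
      ∑ v, ((w v : BiRing K m n) * X v) • pderiv v
    have happ : ∀ G, E' G = ∑ v, ((w v : BiRing K m n) * X v) • pderiv v G := by
      intro G
      have := congrFun (map_sum (Derivation.coeFnAddMonoidHom (R := K) (A := BiRing K m n)
        (M := BiRing K m n)) (fun v => ((w v : BiRing K m n) * X v) • pderiv v) Finset.univ) G
      rw [Finset.sum_apply] at this
      exact this
    have : E = E' := by
      apply derivation_ext
      intro i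
      rw [happ]
      simp only [E, mkDerivation_X, pderiv_X, Pi.single_apply]
      simp
    rw [this, happ]
    simp [mul_assoc]
  obtain ⟨δ, hδ⟩ := exists_der (vIdealB K 𝕏) (M := BiRing K m n ⧸ vIdealB K 𝕏)
    ((Ideal.Quotient.mkₐ K (vIdealB K 𝕏)).toLinearMap ∘ₗ (E : BiRing K m n →ₗ[K] BiRing K m n))
    (by
      intro F G
      change Ideal.Quotient.mk _ (E (F * G)) = _ • Ideal.Quotient.mk _ (E G) +
        _ • Ideal.Quotient.mk _ (E F)
      rw [Derivation.leibniz, map_add]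
      rfl)
    (by
      intro F hF
      change Ideal.Quotient.mk _ (E F) = 0
      rw [Ideal.Quotient.eq_zero_iff_mem]
      refine Submodule.span_induction ?_ ?_ ?_ ?_ hF
      · rintro G ⟨⟨d, hd⟩, hG⟩
        rw [hE, euler a b hd]
        exact nsmul_mem (mem_of_vanish hd hG) _
      · simp
      · intro x y _ _ hx hy
        rw [map_add]; exact Ideal.add_mem _ hx hy
      · intro c x hx hx'
        rw [smul_eq_mul, Derivation.leibniz]
        exact Ideal.add_mem _ (Ideal.mul_mem_left _ _ hx') (Ideal.mul_mem_right _ _ hx))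
  refine ⟨δ, ?_, ?_⟩
  · rw [x0B, hδ]
    change Ideal.Quotient.mk _ (E _) = _
    simp [E, w]
  · rw [y0B, hδ]
    change Ideal.Quotient.mk _ (E _) = _
    simp [E, w]

theorem part1 (𝕏 : Finset (BiPt K m n)) (h : ACMxy K 𝕏) (I : Ideal (BiRing K m n))
    (hI : I = vIdealB K 𝕏) :
    Function.Injective (fun ab : (BiRing K m n ⧸ I) × (BiRing K m n ⧸ I) =>
      ab.1 • KaehlerDifferential.D K (BiRing K m n ⧸ I) (x0B K I) +
      ab.2 • KaehlerDifferential.D K (BiRing K m n ⧸ I) (y0B K I)) := by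
  subst hI
  rintro ⟨a, b⟩ ⟨a', b'⟩ hab
  simp only at hab
  obtain ⟨δ, h1, h2⟩ := euler_der 𝕏 1 0
  obtain ⟨ε, h3, h4⟩ := euler_der 𝕏 0 1
  have e1 := congrArg δ.liftKaehlerDifferential hab
  have e2 := congrArg ε.liftKaehlerDifferential hab
  simp only [map_add, map_smul, Derivation.liftKaehlerDifferential_comp_D, h1, h2, h3, h4,
    Nat.cast_one, Nat.cast_zero, one_mul, zero_mul, smul_eq_mul, mul_zero, add_zero,
    zero_add] at e1 e2
  have f1 : a - a' = 0 := h.1 _ (by linear_combination e1)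
  have f2 : b - b' = 0 := y0_reg 𝕏 h _ (by linear_combination e2)
  rw [sub_eq_zero.mp f1, sub_eq_zero.mp f2]

theorem part3 (I : Ideal (BiRing K m n)) :
    LinearMap.ker
      (KaehlerDifferential.map K (↥(Ro K I)) (BiRing K m n ⧸ I) (BiRing K m n ⧸ I)) =
      Submodule.span (BiRing K m n ⧸ I)
        {KaehlerDifferential.D K (BiRing K m n ⧸ I) (x0B K I),
         KaehlerDifferential.D K (BiRing K m n ⧸ I) (y0B K I)} := by
  set N := Submodule.span (BiRing K m n ⧸ I)
        {KaehlerDifferential.D K (BiRing K m n ⧸ I) (x0B K I),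
         KaehlerDifferential.D K (BiRing K m n ⧸ I) (y0B K I)} with hN
  apply le_antisymm
  · rw [← KaehlerDifferential.range_mapBaseChange]
    have hD : ∀ r ∈ Ro K I, KaehlerDifferential.D K (BiRing K m n ⧸ I) r ∈ N := by
      intro r hr
      refine Algebra.adjoin_induction ?_ ?_ ?_ ?_ hr
      · rintro x (rfl | rfl)
        · exact Submodule.subset_span (by simp)
        · exact Submodule.subset_span (by simp)
      · intro c; rw [Derivation.map_algebraMap]; exact N.zero_mem
      · intro x y _ _ hx hy; rw [map_add]; exact N.add_mem hx hy
      · intro x y _ _ hx hy; rw [Derivation.leibniz]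
        exact N.add_mem (N.smul_mem _ hy) (N.smul_mem _ hx)
    rintro _ ⟨t, rfl⟩
    induction t with
    | zero => simp
    | add a b ha hb => rw [map_add]; exact N.add_mem ha hb
    | tmul r s =>
      rw [KaehlerDifferential.mapBaseChange_tmul]
      refine N.smul_mem _ ?_
      obtain ⟨x, rfl⟩ := KaehlerDifferential.linearCombination_surjective _ _ s
      induction x using Finsupp.induction_linear with
      | zero => simp
      | add f g hf hg => rw [map_add, map_add]; exact N.add_mem hf hg
      | single a b =>
        rw [Finsupp.linearCombination_single, map_smul, KaehlerDifferential.map_D]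
        exact N.smul_mem (b : BiRing K m n ⧸ I) (hD _ a.2)
  · rw [hN, Submodule.span_le]
    have hD : ∀ r : Ro K I, KaehlerDifferential.D (Ro K I) (BiRing K m n ⧸ I)
        (r : BiRing K m n ⧸ I) = 0 :=
      fun r => Derivation.map_algebraMap _ r
    rintro x (rfl | rfl)
    · rw [SetLike.mem_coe, LinearMap.mem_ker, KaehlerDifferential.map_D]
      exact hD ⟨_, Algebra.subset_adjoin (by simp)⟩
    · rw [SetLike.mem_coe, LinearMap.mem_ker, KaehlerDifferential.map_D]
      exact hD ⟨_, Algebra.subset_adjoin (by simp)⟩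

end two

end MPPaux
namespace MPPaux

open MvPolynomial MultiProjPoints

section three

variable {K : Type} [Field K] {m n : ℕ}

/-- The variables other than `X_0`, `Y_0`. -/
def emb (m n : ℕ) : Fin m ⊕ Fin n → Fin (m+1) ⊕ Fin (n+1) := Sum.map Fin.succ Fin.succ

/-- The differentials of the variables other than `X_0`, `Y_0`. -/
def dX (I : Ideal (BiRing K m n)) (v : Fin m ⊕ Fin n) :
    KaehlerDifferential (↥(Ro K I)) (BiRing K m n ⧸ I) :=
  KaehlerDifferential.D (↥(Ro K I)) (BiRing K m n ⧸ I) (Ideal.Quotient.mk I (X (emb m n v)))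

/-- The presentation map. -/
def Phi (I : Ideal (BiRing K m n)) : (Fin m ⊕ Fin n → BiRing K m n ⧸ I) →ₗ[BiRing K m n ⧸ I]
    KaehlerDifferential (↥(Ro K I)) (BiRing K m n ⧸ I) :=
  Fintype.linearCombination (BiRing K m n ⧸ I) (dX I)

theorem Phi_apply (I : Ideal (BiRing K m n)) (a : Fin m ⊕ Fin n → BiRing K m n ⧸ I) :
    Phi I a = ∑ v, a v • dX I v := rfl

/-- The reduced Jacobian map. -/
def jac (I : Ideal (BiRing K m n)) :
    BiRing K m n →ₗ[K] (Fin m ⊕ Fin n → BiRing K m n ⧸ I) :=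
  LinearMap.pi fun v => (Ideal.Quotient.mkₐ K I).toLinearMap ∘ₗ
    (pderiv (emb m n v) : Derivation K (BiRing K m n) (BiRing K m n)).toLinearMap

theorem jac_apply (I : Ideal (BiRing K m n)) (F : BiRing K m n) (v : Fin m ⊕ Fin n) :
    jac I F v = Ideal.Quotient.mk I (pderiv (emb m n v) F) := rfl

theorem D_Ro (I : Ideal (BiRing K m n)) (F : BiRing K m n) :
    KaehlerDifferential.D (↥(Ro K I)) (BiRing K m n ⧸ I) (Ideal.Quotient.mk I F) =
      Phi I (jac I F) := by
  have hD : ∀ r : Ro K I, KaehlerDifferential.D (Ro K I) (BiRing K m n ⧸ I)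
        (r : BiRing K m n ⧸ I) = 0 :=
      fun r => Derivation.map_algebraMap _ r
  have hx : KaehlerDifferential.D (Ro K I) (BiRing K m n ⧸ I)
      (Ideal.Quotient.mk I (X (Sum.inl 0))) = 0 :=
    hD ⟨x0B K I, Algebra.subset_adjoin (by simp)⟩
  have hy : KaehlerDifferential.D (Ro K I) (BiRing K m n ⧸ I)
      (Ideal.Quotient.mk I (X (Sum.inr 0))) = 0 :=
    hD ⟨y0B K I, Algebra.subset_adjoin (by simp)⟩
  rw [D_mk, Phi_apply, Fintype.sum_sum_type, Fintype.sum_sum_type, Fin.sum_univ_succ,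
    Fin.sum_univ_succ, hx, hy, smul_zero, smul_zero, zero_add, zero_add]
  rfl

theorem jac_mul (I : Ideal (BiRing K m n)) (F G : BiRing K m n) :
    jac I (F * G) = Ideal.Quotient.mk I F • jac I G + Ideal.Quotient.mk I G • jac I F := by
  funext v
  rw [jac_apply, Derivation.leibniz, map_add]
  rfl

theorem ker_Phi (I : Ideal (BiRing K m n)) (a : Fin m ⊕ Fin n → BiRing K m n ⧸ I)
    (ha : Phi I a = 0) : ∃ F ∈ I, jac I F = a := by
  classical
  let N : Submodule (BiRing K m n ⧸ I) (Fin m ⊕ Fin n → BiRing K m n ⧸ I) :=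
    { carrier := {a | ∃ F ∈ I, jac I F = a}
      add_mem' := by
        rintro _ _ ⟨F, hF, rfl⟩ ⟨G, hG, rfl⟩
        exact ⟨F + G, I.add_mem hF hG, map_add _ _ _⟩
      zero_mem' := ⟨0, I.zero_mem, map_zero _⟩
      smul_mem' := by
        rintro c _ ⟨F, hF, rfl⟩
        obtain ⟨c, rfl⟩ := Ideal.Quotient.mk_surjective c
        refine ⟨c * F, I.mul_mem_left _ hF, ?_⟩
        rw [jac_mul]
        funext u
        change _ + Ideal.Quotient.mk I F * jac I c u = _
        rw [Ideal.Quotient.eq_zero_iff_mem.mpr hF, zero_mul, add_zero] }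
  obtain ⟨δ, hδ⟩ := exists_der I (M := (Fin m ⊕ Fin n → BiRing K m n ⧸ I) ⧸ N)
    ((N.mkQ.restrictScalars K) ∘ₗ jac I)
    (by
      intro F G
      simp only [LinearMap.comp_apply, LinearMap.restrictScalars_apply, jac_mul, map_add, map_smul])
    (by
      intro F hF
      simp only [LinearMap.comp_apply, LinearMap.restrictScalars_apply]
      rw [Submodule.mkQ_apply, Submodule.Quotient.mk_eq_zero]
      exact ⟨F, hF, rfl⟩)
  have hX : ∀ v, jac I (X (emb m n v)) = Pi.single v 1 := by
    intro v
    funext u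
    have hinj : Function.Injective (emb m n) :=
      Sum.map_injective.mpr ⟨Fin.succ_injective _, Fin.succ_injective _⟩
    rw [jac_apply, pderiv_X]
    by_cases h : v = u
    · subst h; simp
    · rw [Pi.single_eq_of_ne (fun h' => h (hinj h')), Pi.single_eq_of_ne (Ne.symm h), map_zero]
  have hm : (∑ v, a v • KaehlerDifferential.D K (BiRing K m n ⧸ I)
      (Ideal.Quotient.mk I (X (emb m n v)))) ∈ LinearMap.ker
      (KaehlerDifferential.map K (↥(Ro K I)) (BiRing K m n ⧸ I) (BiRing K m n ⧸ I)) := by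
    rw [LinearMap.mem_ker, map_sum, ← ha, Phi_apply]
    refine Finset.sum_congr rfl fun v _ => ?_
    rw [map_smul, KaehlerDifferential.map_D]
    rfl
  rw [part3] at hm
  have hle : Submodule.span (BiRing K m n ⧸ I)
        {KaehlerDifferential.D K (BiRing K m n ⧸ I) (x0B K I),
         KaehlerDifferential.D K (BiRing K m n ⧸ I) (y0B K I)} ≤
      LinearMap.ker δ.liftKaehlerDifferential := by
    rw [Submodule.span_le]
    have h0 : ∀ u, (∀ v, emb m n v ≠ u) → jac I (X u) = 0 := by
      intro u hu
      funext v
      rw [jac_apply, pderiv_X_of_ne (Ne.symm (hu v)), map_zero]; rfl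
    rintro x (rfl | rfl)
    · rw [SetLike.mem_coe, LinearMap.mem_ker, Derivation.liftKaehlerDifferential_comp_D, x0B, hδ,
        LinearMap.comp_apply, h0, map_zero]
      rintro (v | v) h
      · exact Fin.succ_ne_zero v (Sum.inl_injective h)
      · cases h
    · rw [SetLike.mem_coe, LinearMap.mem_ker, Derivation.liftKaehlerDifferential_comp_D, y0B, hδ,
        LinearMap.comp_apply, h0, map_zero]
      rintro (v | v) h
      · cases h
      · exact Fin.succ_ne_zero v (Sum.inr_injective h)
  have h1 := hle hm
  rw [LinearMap.mem_ker, map_sum] at h1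
  have h2 : ∀ v, δ.liftKaehlerDifferential (a v • KaehlerDifferential.D K (BiRing K m n ⧸ I)
      (Ideal.Quotient.mk I (X (emb m n v)))) = N.mkQ (a v • Pi.single v 1) := by
    intro v
    rw [map_smul, Derivation.liftKaehlerDifferential_comp_D, hδ, LinearMap.comp_apply, hX, map_smul]
    rfl
  simp only [h2] at h1
  rw [← map_sum, Submodule.mkQ_apply, Submodule.Quotient.mk_eq_zero] at h1
  have h3 : ∑ v, a v • (Pi.single v 1 : Fin m ⊕ Fin n → BiRing K m n ⧸ I) = a := by
    funext u
    rw [Finset.sum_apply, Finset.sum_eq_single u]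
    · simp
    · intro b _ hb
      simp [Ne.symm hb]
    · simp
  rw [h3] at h1
  exact h1

theorem Phi_jac (I : Ideal (BiRing K m n)) {F : BiRing K m n} (hF : F ∈ I) :
    Phi I (jac I F) = 0 := by
  rw [← D_Ro, Ideal.Quotient.eq_zero_iff_mem.mpr hF, map_zero]

theorem mem_sq (p : BiPt K m n) (h0 : p.1 0 ≠ 0) (h0' : p.2 0 ≠ 0) {F : BiRing K m n} {d : ℤ × ℤ}
    (hF : IsBihom K F d) (hp : evalB K p F = 0)
    (hd : ∀ v, evalB K p (pderiv (emb m n v) F) = 0) : F ∈ ptIdealB K p ^ 2 := by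
  set s : BiRing K m n := C (p.1 0)⁻¹ * X (Sum.inl 0) with hs
  set t : BiRing K m n := C (p.2 0)⁻¹ * X (Sum.inr 0) with ht
  set a : Fin (m+1) ⊕ Fin (n+1) → BiRing K m n :=
    Sum.elim (fun i => s * algebraMap K _ (p.1 i)) (fun i => t * algebraMap K _ (p.2 i)) with ha
  set b : Fin (m+1) ⊕ Fin (n+1) → BiRing K m n := fun v => X v - a v with hb
  have hbm : ∀ v, b v ∈ ptIdealB K p := by
    intro v
    rcases v with i | i
    · refine Ideal.subset_span ⟨⟨(1, 0), ?_⟩, ?_⟩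
      · refine (bihom_X (Sum.inl i)).sub ?_
        have : a (Sum.inl i) = C ((p.1 0)⁻¹ * p.1 i) * X (Sum.inl 0) := by
          simp only [ha, Sum.elim_inl, hs, algebraMap_eq, C_mul]; ring
        rw [this]
        exact (bihom_X (Sum.inl 0)).C_mul _
      · simp [evalB, hb, ha, hs, h0]
    · refine Ideal.subset_span ⟨⟨(0, 1), ?_⟩, ?_⟩
      · refine (bihom_X (Sum.inr i)).sub ?_
        have : a (Sum.inr i) = C ((p.2 0)⁻¹ * p.2 i) * X (Sum.inr 0) := by
          simp only [ha, Sum.elim_inr, ht, algebraMap_eq, C_mul]; ring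
        rw [this]
        exact (bihom_X (Sum.inr 0)).C_mul _
      · simp [evalB, hb, ha, ht, h0']
  have hT := taylor (ptIdealB K p) a b hbm F
  have e1 : (fun v => a v + b v) = X := by funext v; simp [hb]
  have e2 : aeval a F = 0 := by rw [ha, aeval_bihom s t p hF, hp]; simp
  have e3 : ∑ v, b v * aeval a (pderiv v F) = 0 := by
    refine Finset.sum_eq_zero fun v _ => ?_
    have hv : (∃ u, emb m n u = v) ∨ b v = 0 := by
      rcases v with i | i
      · refine Fin.cases ?_ (fun j => ?_) i
        · right
          simp only [hb, ha, Sum.elim_inl, hs, algebraMap_eq]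
          rw [mul_right_comm, ← C_mul, inv_mul_cancel₀ h0]; simp
        · left; exact ⟨Sum.inl j, rfl⟩
      · refine Fin.cases ?_ (fun j => ?_) i
        · right
          simp only [hb, ha, Sum.elim_inr, ht, algebraMap_eq]
          rw [mul_right_comm, ← C_mul, inv_mul_cancel₀ h0']; simp
        · left; exact ⟨Sum.inr j, rfl⟩
    rcases hv with ⟨u, rfl⟩ | hv
    · rw [ha, aeval_bihom s t p (pderiv_bihom hF _), hd]; simp
    · rw [hv, zero_mul]
  rw [e1, e2, e3, aeval_X_self, sub_zero, sub_zero] at hT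
  exact hT

theorem dbl_iff (𝕏 : Finset (BiPt K m n)) (hgood : GoodConfig K 𝕏) (hACM : ACMxy K 𝕏)
    {F : BiRing K m n} {d : ℤ × ℤ} (hF : IsBihom K F d) :
    F ∈ dblIdeal K 𝕏 ↔ F ∈ vIdealB K 𝕏 ∧ jac (vIdealB K 𝕏) F = 0 := by
  have hj : jac (vIdealB K 𝕏) F = 0 ↔ ∀ v, pderiv (emb m n v) F ∈ vIdealB K 𝕏 := by
    rw [funext_iff]
    refine forall_congr' fun v => ?_
    rw [jac_apply, Pi.zero_apply, Ideal.Quotient.eq_zero_iff_mem]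
  rw [hj]
  simp only [dblIdeal, Ideal.mem_iInf]
  constructor
  · intro h
    refine ⟨mem_of_vanish hF fun p hp => ?_, fun v => mem_of_vanish (pderiv_bihom hF _) fun p hp => ?_⟩
    · exact pt_le p (Ideal.pow_le_self two_ne_zero (h p hp))
    · exact pt_le p (pderiv_sq _ _ (h p hp) _)
  · rintro ⟨h1, h2⟩ p hp
    have hx : evalB K p (X (Sum.inl 0)) ≠ 0 := nzd_ne 𝕏 hgood _ hACM.1 hp
    have hy : evalB K p (X (Sum.inr 0)) ≠ 0 := nzd_ne 𝕏 hgood _ (y0_reg 𝕏 hACM) hp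
    refine mem_sq p (by simpa [evalB] using hx) (by simpa [evalB] using hy) hF (vanish h1 hp)
      fun v => vanish (h2 v) hp

theorem rk {V W : Type} [AddCommGroup V] [Module K V] [AddCommGroup W] [Module K W]
    (f : V →ₗ[K] W) (p : Submodule K V) [Module.Finite K p] :
    Module.finrank K (p.map f) + Module.finrank K ↥(p ⊓ LinearMap.ker f) = Module.finrank K p := by
  have h := LinearMap.finrank_range_add_finrank_ker (f.domRestrict p)
  rw [LinearMap.range_domRestrict, LinearMap.ker_domRestrict] at h
  rw [← h]
  congr 1
  have : (Submodule.comap p.subtype (LinearMap.ker f)).map p.subtype = p ⊓ LinearMap.ker f := by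
    rw [Submodule.map_comap_subtype]
  rw [← this]
  exact (LinearEquiv.finrank_eq (Submodule.equivMapOfInjective p.subtype
    (Submodule.subtype_injective p) _)).symm

theorem HFI_add (J : Ideal (BiRing K m n)) (d : ℤ × ℤ) :
    HFI K J d + Module.finrank K
      ↥(weightedHomogeneousSubmodule K (biwt m n) d ⊓ J.restrictScalars K) =
      Module.finrank K (weightedHomogeneousSubmodule K (biwt m n) d) := by
  have := fd (K := K) (m := m) (n := n) d
  have h := rk (Ideal.Quotient.mkₐ K J).toLinearMap (weightedHomogeneousSubmodule K (biwt m n) d)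
  have hk : LinearMap.ker (Ideal.Quotient.mkₐ K J).toLinearMap = J.restrictScalars K := by
    ext F
    rw [LinearMap.mem_ker]
    exact Ideal.Quotient.eq_zero_iff_mem
  rw [hk] at h
  exact h

/-- inclusion of the graded piece of the free module. -/
def incl (I : Ideal (BiRing K m n)) (d : ℤ × ℤ) :
    ((v : Fin m ⊕ Fin n) → degPieceB K I (d - biwt m n (emb m n v))) →ₗ[K]
      (Fin m ⊕ Fin n → BiRing K m n ⧸ I) :=
  LinearMap.pi fun v => (degPieceB K I (d - biwt m n (emb m n v))).subtype ∘ₗ LinearMap.proj v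

theorem incl_inj (I : Ideal (BiRing K m n)) (d : ℤ × ℤ) : Function.Injective (incl I d) := by
  intro a b h
  funext v
  exact Subtype.ext (congrFun h v)

theorem jac_incl (I : Ideal (BiRing K m n)) {d : ℤ × ℤ} {F : BiRing K m n} (hF : IsBihom K F d) :
    ∃ a, incl I d a = jac I F :=
  ⟨fun v => ⟨Ideal.Quotient.mk I (pderiv (emb m n v) F), ⟨_, pderiv_bihom hF _, rfl⟩⟩, rfl⟩

theorem range_incl (I : Ideal (BiRing K m n)) (d : ℤ × ℤ) :
    LinearMap.range ((Phi I).restrictScalars K ∘ₗ incl I d) = omegaRelPiece K I d := by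
  apply le_antisymm
  · rintro _ ⟨a, rfl⟩
    rw [LinearMap.comp_apply, LinearMap.restrictScalars_apply, Phi_apply]
    refine Submodule.sum_mem _ fun v _ => Submodule.subset_span ?_
    refine ⟨d - biwt m n (emb m n v), biwt m n (emb m n v), by simp, _, (a v).2, _,
      ⟨X (emb m n v), bihom_X _, rfl⟩, rfl⟩
  · refine Submodule.span_le.mpr ?_
    rintro _ ⟨d₁, d₂, hd, _, ⟨f, hf, rfl⟩, _, ⟨g, hg, rfl⟩, rfl⟩
    refine ⟨fun v => ⟨Ideal.Quotient.mk I (f * pderiv (emb m n v) g), ⟨_, ?_, rfl⟩⟩, ?_⟩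
    · have : d - biwt m n (emb m n v) = d₁ + (d₂ - biwt m n (emb m n v)) := by
        rw [← hd, add_sub_assoc]
      rw [this]
      exact IsWeightedHomogeneous.mul hf (pderiv_bihom hg _)
    · change Phi I _ = Ideal.Quotient.mk I f • KaehlerDifferential.D (↥(Ro K I)) _
        (Ideal.Quotient.mk I g)
      rw [D_Ro, ← map_smul]
      congr 1

theorem ker_incl (𝕏 : Finset (BiPt K m n)) (d : ℤ × ℤ) :
    (LinearMap.ker ((Phi (vIdealB K 𝕏)).restrictScalars K ∘ₗ incl (vIdealB K 𝕏) d)).map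
      (incl (vIdealB K 𝕏) d) =
    (weightedHomogeneousSubmodule K (biwt m n) d ⊓ (vIdealB K 𝕏).restrictScalars K).map
      (jac (vIdealB K 𝕏)) := by
  apply le_antisymm
  · rintro _ ⟨a, ha, rfl⟩
    obtain ⟨F, hF, hFa⟩ := ker_Phi (vIdealB K 𝕏) (incl _ d a) ha
    refine ⟨weightedHomogeneousComponent (biwt m n) d F,
      ⟨weightedHomogeneousComponent_isWeightedHomogeneous d F, homog 𝕏 hF d⟩, ?_⟩
    rw [← hFa]
    funext v
    have h1 := congrFun hFa v
    obtain ⟨A, hA, hA'⟩ := (a v).2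
    have h2 : Ideal.Quotient.mk (vIdealB K 𝕏) (pderiv (emb m n v) F) =
      Ideal.Quotient.mk (vIdealB K 𝕏) A := h1.trans hA'.symm
    rw [jac_apply, jac_apply, h2]
    rw [Ideal.Quotient.eq] at h2 ⊢
    have h3 := homog 𝕏 h2 (d - biwt m n (emb m n v))
    rw [map_sub, ← pderiv_comp, IsWeightedHomogeneous.weightedHomogeneousComponent_same hA] at h3
    exact h3
  · rintro _ ⟨F, ⟨hF, hFI⟩, rfl⟩
    obtain ⟨a, ha⟩ := jac_incl (vIdealB K 𝕏) hF
    refine ⟨a, ?_, ha⟩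
    change Phi _ (incl _ d a) = 0
    rw [ha]
    exact Phi_jac _ hFI

theorem part4 (𝕏 : Finset (BiPt K m n)) (hgood : GoodConfig K 𝕏) (hACM : ACMxy K 𝕏)
    (d : ℤ × ℤ) :
    (HFOmegaRel K (vIdealB K 𝕏) d : ℤ) =
        m * HFB K 𝕏 (d.1 - 1, d.2) + n * HFB K 𝕏 (d.1, d.2 - 1) +
          HFB K 𝕏 d - HFI K (dblIdeal K 𝕏) d := by
  have hfd := fun d => fd (K := K) (m := m) (n := n) d
  have : ∀ d, Module.Finite K (degPieceB K (vIdealB K 𝕏) d) := fun d => by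
    unfold degPieceB
    exact Module.Finite.map _ _
  set f := (Phi (vIdealB K 𝕏)).restrictScalars K ∘ₗ incl (vIdealB K 𝕏) d with hf
  have h1 := LinearMap.finrank_range_add_finrank_ker f
  rw [range_incl, Module.finrank_pi_fintype, Fintype.sum_sum_type] at h1
  have h2 : Module.finrank K (LinearMap.ker f) = Module.finrank K
      ↥((weightedHomogeneousSubmodule K (biwt m n) d ⊓ (vIdealB K 𝕏).restrictScalars K).map
      (jac (vIdealB K 𝕏))) := by
    rw [← ker_incl]
    exact LinearEquiv.finrank_eq (Submodule.equivMapOfInjective _ (incl_inj _ _) _)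
  have : Module.Finite K ↥(weightedHomogeneousSubmodule K (biwt m n) d ⊓
      (vIdealB K 𝕏).restrictScalars K) :=
    Submodule.finiteDimensional_of_le inf_le_left
  have h3 := rk (jac (vIdealB K 𝕏))
    (weightedHomogeneousSubmodule K (biwt m n) d ⊓ (vIdealB K 𝕏).restrictScalars K)
  have h4 : weightedHomogeneousSubmodule K (biwt m n) d ⊓ (vIdealB K 𝕏).restrictScalars K ⊓
      LinearMap.ker (jac (vIdealB K 𝕏)) =
      weightedHomogeneousSubmodule K (biwt m n) d ⊓ (dblIdeal K 𝕏).restrictScalars K := by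
    ext F
    constructor
    · rintro ⟨⟨ha, hb⟩, hc⟩
      exact ⟨ha, (dbl_iff 𝕏 hgood hACM ha).mpr ⟨hb, hc⟩⟩
    · rintro ⟨ha, hb⟩
      obtain ⟨hb, hc⟩ := (dbl_iff 𝕏 hgood hACM ha).mp hb
      exact ⟨⟨ha, hb⟩, hc⟩
  rw [h4] at h3
  have h5 := HFI_add (vIdealB K 𝕏) d
  have h6 := HFI_add (dblIdeal K 𝕏) d
  have h7 : ∑ i : Fin m, Module.finrank K
      (degPieceB K (vIdealB K 𝕏) (d - biwt m n (emb m n (Sum.inl i)))) =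
      m * HFB K 𝕏 (d.1 - 1, d.2) := by
    have : ∀ i : Fin m, d - biwt m n (emb m n (Sum.inl i)) = (d.1 - 1, d.2) := by
      intro i; simp [emb, biwt, Prod.ext_iff]
    rw [Finset.sum_congr rfl (g := fun _ : Fin m => HFB K 𝕏 (d.1 - 1, d.2))
      (fun i _ => by rw [this i]; rfl)]
    simp
  have h8 : ∑ i : Fin n, Module.finrank K
      (degPieceB K (vIdealB K 𝕏) (d - biwt m n (emb m n (Sum.inr i)))) =
      n * HFB K 𝕏 (d.1, d.2 - 1) := by
    have : ∀ i : Fin n, d - biwt m n (emb m n (Sum.inr i)) = (d.1, d.2 - 1) := by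
      intro i; simp [emb, biwt, Prod.ext_iff]
    rw [Finset.sum_congr rfl (g := fun _ : Fin n => HFB K 𝕏 (d.1, d.2 - 1))
      (fun i _ => by rw [this i]; rfl)]
    simp
  rw [h7, h8] at h1
  change HFOmegaRel K (vIdealB K 𝕏) d + _ = _ at h1
  change HFB K 𝕏 d + _ = _ at h5
  zify at h1 h2 h3 h5 h6
  linarith

end three

end MPPaux

open MultiProjPoints in
/-- Proposition 2.11: for an ACM set `𝕏` of `s` distinct
points in `P^m × P^n` there is an exact sequence of bigraded `R_𝕏`-modules
`0 → R_𝕏 dx₀ ⊕ R_𝕏 dy₀ → Ω¹_{R_𝕏/K} → Ω¹_{R_𝕏/R_o} → 0`, and in particular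
`HF_{Ω¹_{R_𝕏/R_o}}(i,j) = m·HF_𝕏(i-1,j) + n·HF_𝕏(i,j-1) + HF_𝕏(i,j) - HF_𝕐(i,j)`
for all `(i,j) ∈ ℕ²`, where `I_𝕐 = I_{p_1}² ∩ ⋯ ∩ I_{p_s}²`. -/
theorem statement_2 (K : Type) [Field K] [CharZero K] [DecidableEq K]
    (m n : ℕ) (𝕏 : Finset (BiPt K m n)) (hgood : GoodConfig K 𝕏)
    (hne : 𝕏.Nonempty) (hACM : ACMxy K 𝕏)
    (I : Ideal (BiRing K m n)) (hI : I = vIdealB K 𝕏) :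
    Function.Injective (fun ab : (BiRing K m n ⧸ I) × (BiRing K m n ⧸ I) =>
      ab.1 • KaehlerDifferential.D K (BiRing K m n ⧸ I) (x0B K I) +
      ab.2 • KaehlerDifferential.D K (BiRing K m n ⧸ I) (y0B K I)) ∧
    Function.Surjective
      (KaehlerDifferential.map K (↥(Ro K I)) (BiRing K m n ⧸ I) (BiRing K m n ⧸ I)) ∧
    LinearMap.ker
      (KaehlerDifferential.map K (↥(Ro K I)) (BiRing K m n ⧸ I) (BiRing K m n ⧸ I)) =
      Submodule.span (BiRing K m n ⧸ I)
        {KaehlerDifferential.D K (BiRing K m n ⧸ I) (x0B K I),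
         KaehlerDifferential.D K (BiRing K m n ⧸ I) (y0B K I)} ∧
    ∀ i j : ℕ,
      (HFOmegaRel K I ((i : ℤ), (j : ℤ)) : ℤ) =
        m * HFB K 𝕏 ((i : ℤ) - 1, (j : ℤ)) + n * HFB K 𝕏 ((i : ℤ), (j : ℤ) - 1) +
          HFB K 𝕏 ((i : ℤ), (j : ℤ)) - HFI K (dblIdeal K 𝕏) ((i : ℤ), (j : ℤ)) := by
  refine ⟨MPPaux.part1 𝕏 hACM I hI, KaehlerDifferential.map_surjective _ _ _, MPPaux.part3 I, ?_⟩
  intro i j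
  subst hI
  exact MPPaux.part4 𝕏 hgood hACM ((i : ℤ), (j : ℤ))
end
end

section
/- Let X be an ACM set of distinct points in P^m × P^n. Then: (a) ϑ_{X_1}R_X · ϑ_{X_2}R_X ⊆ ϑ_X, where ϑ_{X_1}R_X and ϑ_{X_2}R_X denote the extensions of the Kähler differents of X_1 and X_2 to R_X; (b) ϑ_X contains a bihomogeneous non-zerodivisor of R_X. -/
/- Common setup: finite sets of points in the multiprojective space
   `P^m x P^n` over a field `K` of characteristic zero, their bihomogeneous
   vanishing ideals, bigraded Hilbert functions, Kähler differents,
   separators, Cayley-Bacharach property and complete intersections. -/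

open MvPolynomial

set_option maxHeartbeats 1000000
set_option synthInstance.maxHeartbeats 400000

noncomputable section

namespace MultiProjPoints

section Helpers

variable {K : Type} [Field K] [CharZero K] [DecidableEq K] {m n : ℕ}

attribute [local instance] MvPolynomial.weightedGradedAlgebra

/-- Determinants of Jacobian matrices of elements of `I` lie in the Kähler different. -/
lemma det_mem_kdiffB (I : Ideal (BiRing K m n)) {r : ℕ} (H : Fin r → BiRing K m n)
    (hH : Ideal.span (Set.range H) = I) (P : Fin (m+n) → BiRing K m n) (hP : ∀ u, P u ∈ I) :
    Ideal.Quotient.mk I (Matrix.det (Matrix.of fun u v : Fin (m+n) =>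
      pderiv (bvar m n v) (P u))) ∈ kdiffB K I H := by
  have h1 : ∀ u, ∃ c : Fin r → BiRing K m n, ∑ k, c k * H k = P u := fun u =>
    Ideal.mem_span_range_iff_exists_fun.mp (hH ▸ hP u)
  choose c hc using h1
  have hHI : ∀ k, Ideal.Quotient.mk I (H k) = 0 := fun k =>
    Ideal.Quotient.eq_zero_iff_mem.mpr (hH ▸ Ideal.subset_span ⟨k, rfl⟩)
  have hrow : ((Ideal.Quotient.mk I).mapMatrix (Matrix.of fun u v : Fin (m+n) =>
      pderiv (bvar m n v) (P u))) = (fun u => ∑ k, (Ideal.Quotient.mk I (c u k)) •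
        (fun v => Ideal.Quotient.mk I (pderiv (bvar m n v) (H k)))) := by
    ext u v
    simp only [RingHom.mapMatrix_apply, Matrix.map_apply, Matrix.of_apply, Finset.sum_apply,
      Pi.smul_apply, smul_eq_mul]
    rw [← hc u, map_sum, map_sum]
    refine Finset.sum_congr rfl fun k _ => ?_
    rw [Derivation.leibniz, map_add, smul_eq_mul, smul_eq_mul, map_mul, map_mul, hHI, zero_mul,
      add_zero]
  rw [RingHom.map_det, hrow]
  change Matrix.detRowAlternating.toMultilinearMap _ ∈ _
  rw [MultilinearMap.map_sum]
  refine Ideal.sum_mem _ fun ρ _ => ?_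
  rw [MultilinearMap.map_smul_univ, smul_eq_mul]
  refine Ideal.mul_mem_left _ _ (Ideal.subset_span ⟨ρ, ?_⟩)
  exact RingHom.map_det _ _

lemma bvar_castAdd (i : Fin m) : bvar m n (Fin.castAdd n i) = Sum.inl i.succ := by
  unfold bvar
  rw [dif_pos (by simp)]
  congr 1

lemma bvar_natAdd (i : Fin n) : bvar m n (Fin.natAdd m i) = Sum.inr i.succ := by
  unfold bvar
  rw [dif_neg (by simp)]
  congr 1
  ext
  simp

lemma bvar_injective : Function.Injective (bvar m n) := by
  intro u v h
  induction u using Fin.addCases <;> induction v using Fin.addCases <;>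
    simp_all [bvar_castAdd, bvar_natAdd]

/-- The base coordinate belonging to a coordinate. -/
def bbase : (Fin (m+1) ⊕ Fin (n+1)) → (Fin (m+1) ⊕ Fin (n+1)) :=
  Sum.elim (fun _ => Sum.inl 0) (fun _ => Sum.inr 0)

lemma bvar_ne_bbase (v : Fin (m+n)) (s : Fin (m+1) ⊕ Fin (n+1)) : bbase s ≠ bvar m n v := by
  induction v using Fin.addCases <;> cases s <;>
    simp [bvar_castAdd, bvar_natAdd, bbase, (Fin.succ_ne_zero _).symm]

lemma biwt_bbase (s : Fin (m+1) ⊕ Fin (n+1)) : biwt m n (bbase s) = biwt m n s := by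
  cases s <;> rfl

lemma pderiv_rename_inl (j : Fin (n+1)) (f : PRing K m) :
    pderiv (Sum.inr j : Fin (m+1) ⊕ Fin (n+1)) (rename Sum.inl f) = 0 := by
  apply pderiv_eq_zero_of_notMem_vars
  intro h
  have := vars_rename _ _ h
  simp at this

lemma pderiv_rename_inr (j : Fin (m+1)) (f : PRing K n) :
    pderiv (Sum.inl j : Fin (m+1) ⊕ Fin (n+1)) (rename Sum.inr f) = 0 := by
  apply pderiv_eq_zero_of_notMem_vars
  intro h
  have := vars_rename _ _ h
  simp at this

lemma det_block (A : Fin m → PRing K m) (B : Fin n → PRing K n) :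
    (Matrix.det (Matrix.of fun u v : Fin (m+n) => pderiv (bvar m n v)
      (Fin.addCases (motive := fun _ => BiRing K m n) (fun i => rename Sum.inl (A i))
        (fun j => rename Sum.inr (B j)) u))) =
    rename Sum.inl (Matrix.det (Matrix.of fun u v : Fin m => pderiv (Fin.succ v) (A u))) *
    rename Sum.inr (Matrix.det (Matrix.of fun u v : Fin n => pderiv (Fin.succ v) (B u))) := by
  rw [← Matrix.det_submatrix_equiv_self finSumFinEquiv, AlgHom.map_det, AlgHom.map_det,
    ← Matrix.det_fromBlocks_zero₂₁ _ 0]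
  congr 1
  ext1 u v
  rcases u with u | u <;> rcases v with v | v <;>
    simp [bvar_castAdd, bvar_natAdd, pderiv_rename_inl, pderiv_rename_inr,
      pderiv_rename Sum.inl_injective, pderiv_rename Sum.inr_injective]

lemma bihom_rename_inl {f : PRing K m} {d : ℤ} (hf : IsHom1 K f d) :
    IsBihom K (rename Sum.inl f : BiRing K m n) (d, 0) := by
  intro e he
  obtain ⟨e', rfl, he'⟩ := coeff_rename_ne_zero _ _ _ he
  have := hf he'
  rw [Finsupp.weight_apply] at this ⊢
  rw [Finsupp.sum_mapDomain_index (by simp) (by intros; rw [add_smul]), ← this]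
  simp [biwt, wt1, Finsupp.sum, Prod.ext_iff, Prod.fst_sum, Prod.snd_sum]

lemma bihom_rename_inr {f : PRing K n} {d : ℤ} (hf : IsHom1 K f d) :
    IsBihom K (rename Sum.inr f : BiRing K m n) (0, d) := by
  intro e he
  obtain ⟨e', rfl, he'⟩ := coeff_rename_ne_zero _ _ _ he
  have := hf he'
  rw [Finsupp.weight_apply] at this ⊢
  rw [Finsupp.sum_mapDomain_index (by simp) (by intros; rw [add_smul]), ← this]
  simp [biwt, wt1, Finsupp.sum, Prod.ext_iff, Prod.fst_sum, Prod.snd_sum]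

lemma rename_inl_mem {𝕏 : Finset (BiPt K m n)} {f : PRing K m}
    (hf : f ∈ vIdeal1 K (𝕏.image Prod.fst)) : rename Sum.inl f ∈ vIdealB K 𝕏 := by
  have : vIdeal1 K (𝕏.image Prod.fst) ≤ (vIdealB K 𝕏).comap
      (rename Sum.inl : PRing K m →ₐ[K] BiRing K m n) := by
    refine Ideal.span_le.mpr ?_
    rintro g ⟨⟨d, hd⟩, hg⟩
    refine Ideal.subset_span ⟨⟨_, bihom_rename_inl hd⟩, fun p hp => ?_⟩
    rw [evalB, eval_rename, Sum.elim_comp_inl]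
    exact hg _ (Finset.mem_image_of_mem _ hp)
  exact this hf

lemma rename_inr_mem {𝕏 : Finset (BiPt K m n)} {f : PRing K n}
    (hf : f ∈ vIdeal1 K (𝕏.image Prod.snd)) : rename Sum.inr f ∈ vIdealB K 𝕏 := by
  have : vIdeal1 K (𝕏.image Prod.snd) ≤ (vIdealB K 𝕏).comap
      (rename Sum.inr : PRing K n →ₐ[K] BiRing K m n) := by
    refine Ideal.span_le.mpr ?_
    rintro g ⟨⟨d, hd⟩, hg⟩
    refine Ideal.subset_span ⟨⟨_, bihom_rename_inr hd⟩, fun p hp => ?_⟩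
    rw [evalB, eval_rename, Sum.elim_comp_inr]
    exact hg _ (Finset.mem_image_of_mem _ hp)
  exact this hf

lemma eval_of_mem {𝕏 : Finset (BiPt K m n)} {f : BiRing K m n} (hf : f ∈ vIdealB K 𝕏)
    {p : BiPt K m n} (hp : p ∈ 𝕏) : evalB K p f = 0 := by
  have : vIdealB K 𝕏 ≤ RingHom.ker (eval (Sum.elim p.1 p.2)) := by
    refine Ideal.span_le.mpr ?_
    rintro g ⟨_, hg⟩
    exact hg p hp
  exact this hf

lemma vIdealB_homog (𝕏 : Finset (BiPt K m n)) :
    (vIdealB K 𝕏).IsHomogeneous (weightedHomogeneousSubmodule K (biwt m n)) := by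
  apply Ideal.homogeneous_span
  rintro x ⟨⟨d, hd⟩, _⟩
  exact ⟨d, hd⟩

lemma comp_mul {f g : BiRing K m n} {e : ℤ × ℤ} (hf : IsBihom K f e) (d : ℤ × ℤ) :
    weightedHomogeneousComponent (biwt m n) (e + d) (f * g) =
      f * weightedHomogeneousComponent (biwt m n) d g := by
  have := DirectSum.coe_decompose_mul_add_of_left_mem
    (weightedHomogeneousSubmodule K (biwt m n)) (i := e) (j := d) (a := f) (b := g) hf
  have key : ∀ (a : BiRing K m n) (i : ℤ × ℤ),
      ((DirectSum.decompose (weightedHomogeneousSubmodule K (biwt m n)) a i :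
        weightedHomogeneousSubmodule K (biwt m n) i) : BiRing K m n) =
      weightedHomogeneousComponent (biwt m n) i a :=
    fun a i => weightedDecomposition.decompose'_apply K (biwt m n) a i
  rw [key, key] at this
  exact this

/-- A bihomogeneous form vanishing nowhere on `𝕏` is a non-zerodivisor. -/
lemma nonzerodiv {𝕏 : Finset (BiPt K m n)} {f : BiRing K m n} {e : ℤ × ℤ}
    (hf : IsBihom K f e) (hne : ∀ p ∈ 𝕏, evalB K p f ≠ 0)
    (z : BiRing K m n ⧸ vIdealB K 𝕏) (hz : Ideal.Quotient.mk (vIdealB K 𝕏) f * z = 0) :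
    z = 0 := by
  obtain ⟨g, rfl⟩ := Ideal.Quotient.mk_surjective z
  rw [← map_mul, Ideal.Quotient.eq_zero_iff_mem] at hz
  rw [Ideal.Quotient.eq_zero_iff_mem,
    mem_iff_weightedHomogeneousComponent_mem K (biwt m n) (vIdealB_homog 𝕏)]
  intro d
  have h1 := weightedHomogeneousComponent_mem_of_mem K (biwt m n) (vIdealB_homog 𝕏) hz (e + d)
  rw [comp_mul hf] at h1
  refine Ideal.subset_span ⟨⟨d, weightedHomogeneousComponent_mem _ _ _⟩, fun p hp => ?_⟩
  have h2 := eval_of_mem h1 hp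
  rw [evalB, map_mul] at h2
  exact (mul_eq_zero.mp h2).resolve_left (hne p hp)

lemma weight_fst_nonneg (e : (Fin (m+1) ⊕ Fin (n+1)) →₀ ℕ) :
    0 ≤ (Finsupp.weight (biwt m n) e).1 := by
  rw [Finsupp.weight_apply, Finsupp.sum, Prod.fst_sum]
  refine Finset.sum_nonneg fun i _ => ?_
  rcases i with i | i <;> simp [biwt]

/-- `p` and `q` non-proportional: a linear form vanishing at `q` and not at `p`. -/
lemma exists_minor {N : ℕ} {p q : Fin (N+1) → K} (hp : p ≠ 0) (hq : q ≠ 0)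
    (h : ¬ ∃ c : K, c ≠ 0 ∧ p = c • q) : ∃ i j, q i * p j - q j * p i ≠ 0 := by
  by_contra! hcon
  obtain ⟨i, hi⟩ := Function.ne_iff.mp hq
  have hi' : q i ≠ 0 := hi
  have hpq : p = (p i / q i) • q := by
    ext j
    have := hcon i j
    simp only [Pi.smul_apply, smul_eq_mul]
    field_simp
    linear_combination this
  refine h ⟨p i / q i, ?_, hpq⟩
  intro h0
  rw [h0, zero_smul] at hpq
  exact hp hpq

lemma exists_sep_pair {𝕏 : Finset (BiPt K m n)} (hgood : GoodConfig K 𝕏) {p q : BiPt K m n}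
    (hp : p ∈ 𝕏) (hq : q ∈ 𝕏) (hqp : q ≠ p) :
    ∃ f : BiRing K m n, IsBihom K f (1, 1) ∧ evalB K p f ≠ 0 ∧ evalB K q f = 0 := by
  obtain ⟨h1, h2, h3⟩ := hgood
  have hX : ∀ s : Fin (m+1) ⊕ Fin (n+1),
      IsWeightedHomogeneous (biwt m n) (X s : BiRing K m n) (biwt m n s) :=
    fun s => isWeightedHomogeneous_X _ _ _
  by_cases h : p.1 = q.1
  · have h' : p.2 ≠ q.2 := fun h' => hqp (Prod.ext h.symm h'.symm)
    obtain ⟨i, j, hij⟩ := exists_minor (h1 p hp).2 (h1 q hq).2 (fun hc => h' (h3 p hp q hq hc))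
    obtain ⟨k, hk⟩ := Function.ne_iff.mp (h1 p hp).1
    refine ⟨X (Sum.inl k) * (C (q.2 i) * X (Sum.inr j) - C (q.2 j) * X (Sum.inr i)), ?_, ?_, ?_⟩
    · have := (hX (Sum.inl k)).mul (((hX (Sum.inr j)).C_mul (q.2 i)).sub
        ((hX (Sum.inr i)).C_mul (q.2 j)))
      simpa [biwt, IsBihom] using this
    · simpa [evalB] using ⟨hk, hij⟩
    · simp [evalB, mul_comm]
  · obtain ⟨i, j, hij⟩ := exists_minor (h1 p hp).1 (h1 q hq).1 (fun hc => h (h2 p hp q hq hc))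
    obtain ⟨k, hk⟩ := Function.ne_iff.mp (h1 p hp).2
    refine ⟨X (Sum.inr k) * (C (q.1 i) * X (Sum.inl j) - C (q.1 j) * X (Sum.inl i)), ?_, ?_, ?_⟩
    · have := (hX (Sum.inr k)).mul (((hX (Sum.inl j)).C_mul (q.1 i)).sub
        ((hX (Sum.inl i)).C_mul (q.1 j)))
      simpa [biwt, IsBihom] using this
    · simpa [evalB] using ⟨hk, hij⟩
    · simp [evalB, mul_comm]

lemma exists_sep {𝕏 : Finset (BiPt K m n)} (hgood : GoodConfig K 𝕏) {p : BiPt K m n}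
    (hp : p ∈ 𝕏) : ∃ f : BiRing K m n,
      IsBihom K f (((𝕏.card - 1 : ℕ) : ℤ), ((𝕏.card - 1 : ℕ) : ℤ)) ∧ IsSepB K 𝕏 p f := by
  have h : ∀ q : BiPt K m n, ∃ f : BiRing K m n, q ∈ 𝕏.erase p →
      (IsBihom K f (1, 1) ∧ evalB K p f ≠ 0 ∧ evalB K q f = 0) := by
    intro q
    by_cases hq : q ∈ 𝕏.erase p
    · obtain ⟨f, hf⟩ := exists_sep_pair hgood hp (Finset.mem_of_mem_erase hq)
        (Finset.ne_of_mem_erase hq)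
      exact ⟨f, fun _ => hf⟩
    · exact ⟨0, fun h => absurd h hq⟩
  choose f hf using h
  refine ⟨∏ q ∈ 𝕏.erase p, f q, ?_, ?_, ?_⟩
  · have := IsWeightedHomogeneous.prod (w := biwt m n) (𝕏.erase p) f (fun _ => (1, 1))
      (fun q hq => (hf q hq).1)
    rw [Finset.sum_const, Finset.card_erase_of_mem hp] at this
    simpa [IsBihom] using this
  · rw [evalB, map_prod]
    exact Finset.prod_ne_zero_iff.mpr fun q hq => (hf q hq).2.1
  · intro q hq hqp
    rw [evalB, map_prod]
    exact Finset.prod_eq_zero (Finset.mem_erase.mpr ⟨hqp, hq⟩)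
      (hf q (Finset.mem_erase.mpr ⟨hqp, hq⟩)).2.2

lemma mem_of_bihom {𝕏 : Finset (BiPt K m n)} {p : BiPt K m n} {f g : BiRing K m n}
    {d e : ℤ × ℤ} (hf : IsBihom K f d) (hs : IsSepB K 𝕏 p f) (hg : IsBihom K g e)
    (h0 : evalB K p g = 0) : g * f ∈ vIdealB K 𝕏 := by
  refine Ideal.subset_span ⟨⟨_, hg.mul hf⟩, fun q hq => ?_⟩
  rw [evalB, map_mul]
  by_cases hqp : q = p
  · subst hqp
    rw [evalB] at h0
    rw [h0, zero_mul]
  · have := hs.2 q hq hqp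
    rw [evalB] at this
    rw [this, mul_zero]

lemma x0_ne {𝕏 : Finset (BiPt K m n)} (hgood : GoodConfig K 𝕏) (hACM : ACMxy K 𝕏)
    {p : BiPt K m n} (hp : p ∈ 𝕏) : p.1 0 ≠ 0 := by
  intro h0
  obtain ⟨f, hf, hs⟩ := exists_sep hgood hp
  have h1 := mem_of_bihom hf hs (isWeightedHomogeneous_X K _ (Sum.inl 0)) (by simp [evalB, h0])
  have h2 := hACM.1 (Ideal.Quotient.mk _ f)
    (by rw [x0B, ← map_mul]; exact Ideal.Quotient.eq_zero_iff_mem.mpr h1)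
  exact hs.1 (eval_of_mem (Ideal.Quotient.eq_zero_iff_mem.mp h2) hp)

lemma y0_ne {𝕏 : Finset (BiPt K m n)} (hgood : GoodConfig K 𝕏) (hACM : ACMxy K 𝕏)
    {p : BiPt K m n} (hp : p ∈ 𝕏) : p.2 0 ≠ 0 := by
  intro h0
  obtain ⟨f, hf, hs⟩ := exists_sep hgood hp
  have h1 := mem_of_bihom hf hs (isWeightedHomogeneous_X K _ (Sum.inr 0)) (by simp [evalB, h0])
  have h2 : y0B K (vIdealB K 𝕏) * Ideal.Quotient.mk _ f = 0 := by
    rw [y0B, ← map_mul]; exact Ideal.Quotient.eq_zero_iff_mem.mpr h1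
  have h3 : ∀ k : ℕ, ∃ w, Ideal.Quotient.mk _ f = x0B K (vIdealB K 𝕏) ^ k * w ∧
      y0B K (vIdealB K 𝕏) * w = 0 := by
    intro k
    induction k with
    | zero => exact ⟨_, by simp, h2⟩
    | succ k ih =>
      obtain ⟨w, hw, hw'⟩ := ih
      obtain ⟨w1, rfl⟩ := Ideal.mem_span_singleton'.mp
        (hACM.2 w (by rw [hw']; exact Ideal.zero_mem _))
      refine ⟨w1, by rw [hw]; ring, hACM.1 _ ?_⟩
      rw [← hw']; ring
  obtain ⟨w, hw, -⟩ := h3 (𝕏.card - 1 + 1)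
  obtain ⟨g, rfl⟩ := Ideal.Quotient.mk_surjective w
  rw [x0B, ← map_pow, ← map_mul, Ideal.Quotient.eq] at hw
  set k := 𝕏.card - 1 with hk
  have h4 := weightedHomogeneousComponent_mem_of_mem K (biwt m n) (vIdealB_homog 𝕏) hw
    ((k : ℤ), (k : ℤ))
  have h5 : IsBihom K (X (Sum.inl 0) ^ (k + 1) : BiRing K m n) (((k + 1 : ℕ) : ℤ), 0) := by
    have := (isWeightedHomogeneous_X K (biwt m n) (Sum.inl 0)).pow (k + 1)
    simpa [IsBihom, biwt] using this
  have h6 : weightedHomogeneousComponent (biwt m n) ((k : ℤ), (k : ℤ))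
      (X (Sum.inl 0) ^ (k + 1) * g) = 0 := by
    have h7 := comp_mul (g := g) h5 (-1, (k : ℤ))
    have h8 : ((((k + 1 : ℕ) : ℤ), 0) + (-1, (k : ℤ)) : ℤ × ℤ) = ((k : ℤ), (k : ℤ)) := by
      ext <;> simp
    rw [h8] at h7
    rw [h7, weightedHomogeneousComponent_eq_zero', mul_zero]
    intro e _ he
    have := weight_fst_nonneg (m := m) (n := n) e
    rw [he] at this
    simp at this
  rw [map_sub, h6, sub_zero, weightedHomogeneousComponent_eq_self hf] at h4
  exact hs.1 (eval_of_mem h4 hp)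

/-- Powers of separators lie in the Kähler different. -/
lemma sep_pow_mem {𝕏 : Finset (BiPt K m n)} (hgood : GoodConfig K 𝕏) (hACM : ACMxy K 𝕏)
    {r : ℕ} (H : Fin r → BiRing K m n) (hH : Ideal.span (Set.range H) = vIdealB K 𝕏)
    {p : BiPt K m n} (hp : p ∈ 𝕏) {f : BiRing K m n} {d : ℤ × ℤ} (hf : IsBihom K f d)
    (hs : IsSepB K 𝕏 p f) :
    Ideal.Quotient.mk (vIdealB K 𝕏) f ^ (2 * (m + n)) ∈ kdiffB K (vIdealB K 𝕏) H := by
  set P : Fin (m+1) ⊕ Fin (n+1) → K := Sum.elim p.1 p.2 with hP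
  set L : Fin (m+1) ⊕ Fin (n+1) → BiRing K m n :=
    fun s => C (P (bbase s)) * X s - C (P s) * X (bbase s) with hL
  have hLf : ∀ s, L s * f ∈ vIdealB K 𝕏 := by
    intro s
    refine mem_of_bihom hf hs (e := biwt m n s) ?_ ?_
    · refine ((isWeightedHomogeneous_X K _ s).C_mul _).sub ?_
      have := (isWeightedHomogeneous_X K (biwt m n) (bbase s)).C_mul (P s)
      rwa [biwt_bbase] at this
    · simp only [evalB, hL, map_sub, map_mul, eval_C, eval_X]
      ring
  have hdet := det_mem_kdiffB (vIdealB K 𝕏) H hH (fun u => L (bvar m n u) * f * f)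
    (fun u => Ideal.mul_mem_right _ _ (hLf _))
  rw [RingHom.map_det] at hdet
  have hmat : (Ideal.Quotient.mk (vIdealB K 𝕏)).mapMatrix (Matrix.of fun u v : Fin (m+n) =>
      pderiv (bvar m n v) (L (bvar m n u) * f * f)) = Matrix.diagonal (fun u =>
        Ideal.Quotient.mk (vIdealB K 𝕏) (C (P (bbase (bvar m n u)))) *
          Ideal.Quotient.mk (vIdealB K 𝕏) f ^ 2) := by
    ext u v
    have h0 : Ideal.Quotient.mk (vIdealB K 𝕏) (L (bvar m n u)) *
        Ideal.Quotient.mk (vIdealB K 𝕏) f = 0 := by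
      rw [← map_mul]; exact Ideal.Quotient.eq_zero_iff_mem.mpr (hLf _)
    have h1 : pderiv (bvar m n v) (L (bvar m n u)) =
        if u = v then C (P (bbase (bvar m n u))) else 0 := by
      simp only [hL, map_sub, pderiv_C_mul]
      rw [pderiv_X_of_ne (bvar_ne_bbase v _), mul_zero, sub_zero]
      split_ifs with h
      · subst h; rw [pderiv_X_self, mul_one]
      · rw [pderiv_X_of_ne (fun h' => h (bvar_injective h')), mul_zero]
    simp only [RingHom.mapMatrix_apply, Matrix.map_apply, Matrix.of_apply, Derivation.leibniz,
      smul_eq_mul, map_add, map_mul, h1, Matrix.diagonal_apply]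
    split_ifs
    · linear_combination (2 * Ideal.Quotient.mk (vIdealB K 𝕏) (pderiv (bvar m n v) f)) * h0
    · rw [map_zero]
      linear_combination (2 * Ideal.Quotient.mk (vIdealB K 𝕏) (pderiv (bvar m n v) f)) * h0
  rw [hmat, Matrix.det_diagonal, Finset.prod_mul_distrib, Finset.prod_const, Finset.card_univ,
    Fintype.card_fin, ← pow_mul, ← map_prod, ← map_prod] at hdet
  have hc : (∏ u : Fin (m+n), P (bbase (bvar m n u))) ≠ 0 := by
    refine Finset.prod_ne_zero_iff.mpr fun u _ => ?_
    rcases bvar m n u with s | s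
    · exact x0_ne hgood hACM hp
    · exact y0_ne hgood hACM hp
  have := Ideal.mul_mem_left _ (Ideal.Quotient.mk (vIdealB K 𝕏)
    (C (∏ u : Fin (m+n), P (bbase (bvar m n u)))⁻¹)) hdet
  rw [← mul_assoc, ← map_mul, ← map_mul, inv_mul_cancel₀ hc, map_one, map_one, one_mul] at this
  exact this

end Helpers

end MultiProjPoints

open MultiProjPoints in
/-- Lemma 3.2: for an ACM set `𝕏` of points in `P^m × P^n`,
(a) `ϑ_{𝕏₁}R_𝕏 · ϑ_{𝕏₂}R_𝕏 ⊆ ϑ_𝕏`, and (b) `ϑ_𝕏` contains a bihomogeneous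
non-zerodivisor of `R_𝕏`. -/
theorem statement_3 (K : Type) [Field K] [CharZero K] [DecidableEq K]
    (m n : ℕ) (𝕏 : Finset (BiPt K m n)) (hgood : GoodConfig K 𝕏)
    (hne : 𝕏.Nonempty) (hACM : ACMxy K 𝕏)
    -- a homogeneous system of generators of `I_{𝕏₁}`
    (r₁ : ℕ) (F : Fin r₁ → PRing K m) (hFhom : ∀ k, ∃ d, IsHom1 K (F k) d)
    (hFgen : Ideal.span (Set.range F) = vIdeal1 K (𝕏.image Prod.fst))
    -- a homogeneous system of generators of `I_{𝕏₂}`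
    (r₂ : ℕ) (G : Fin r₂ → PRing K n) (hGhom : ∀ k, ∃ d, IsHom1 K (G k) d)
    (hGgen : Ideal.span (Set.range G) = vIdeal1 K (𝕏.image Prod.snd))
    -- a bihomogeneous system of generators of `I_𝕏`
    (r : ℕ) (H : Fin r → BiRing K m n) (hHhom : ∀ k, ∃ d, IsBihom K (H k) d)
    (hHgen : Ideal.span (Set.range H) = vIdealB K 𝕏) :
    kdiffExtL K (vIdealB K 𝕏) F * kdiffExtR K (vIdealB K 𝕏) G ≤
      kdiffB K (vIdealB K 𝕏) H ∧
    ∃ h ∈ kdiffB K (vIdealB K 𝕏) H,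
      (∃ f : BiRing K m n, (∃ d, IsBihom K f d) ∧
        Ideal.Quotient.mk (vIdealB K 𝕏) f = h) ∧
      ∀ z : BiRing K m n ⧸ vIdealB K 𝕏, h * z = 0 → z = 0 := by
  refine ⟨?_, ?_⟩
  · rw [kdiffExtL, kdiffExtR, Ideal.span_mul_span', Ideal.span_le]
    rintro _ ⟨_, ⟨ρ, rfl⟩, _, ⟨τ, rfl⟩, rfl⟩
    have h := det_mem_kdiffB (vIdealB K 𝕏) H hHgen
      (fun u => Fin.addCases (motive := fun _ => BiRing K m n)
        (fun i => rename Sum.inl (F (ρ i))) (fun j => rename Sum.inr (G (τ j))) u) ?_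
    · rw [det_block (fun i => F (ρ i)) (fun j => G (τ j)), map_mul] at h
      exact h
    · intro u
      induction u using Fin.addCases with
      | left i =>
        simp only [Fin.addCases_left]
        exact rename_inl_mem (hFgen ▸ Ideal.subset_span ⟨_, rfl⟩)
      | right j =>
        simp only [Fin.addCases_right]
        exact rename_inr_mem (hGgen ▸ Ideal.subset_span ⟨_, rfl⟩)
  · have hsep : ∀ p : BiPt K m n, ∃ f : BiRing K m n, p ∈ 𝕏 →
        (IsBihom K f (((𝕏.card - 1 : ℕ) : ℤ), ((𝕏.card - 1 : ℕ) : ℤ)) ∧ IsSepB K 𝕏 p f) := by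
      intro p
      by_cases hp : p ∈ 𝕏
      · obtain ⟨f, hf⟩ := exists_sep hgood hp
        exact ⟨f, fun _ => hf⟩
      · exact ⟨0, fun h => absurd h hp⟩
    choose f hf using hsep
    have hbi := IsWeightedHomogeneous.sum (w := biwt m n) 𝕏
      (fun p => f p ^ (2 * (m + n) + 1)) _ (fun p hp => (hf p hp).1.pow (2 * (m + n) + 1))
    refine ⟨Ideal.Quotient.mk _ (∑ p ∈ 𝕏, f p ^ (2 * (m + n) + 1)), ?_, ⟨_, ⟨_, hbi⟩, rfl⟩,
      nonzerodiv hbi ?_⟩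
    · rw [map_sum]
      refine Ideal.sum_mem _ fun p hp => ?_
      rw [map_pow, pow_succ]
      exact Ideal.mul_mem_right _ _ (sep_pow_mem hgood hACM H hHgen hp (hf p hp).1 (hf p hp).2)
    · intro p hp
      rw [evalB, map_sum, Finset.sum_eq_single_of_mem p hp, map_pow]
      · exact pow_ne_zero _ (hf p hp).2.1
      · intro q hq hqp
        rw [map_pow]
        have : eval (Sum.elim p.1 p.2) (f q) = 0 := (hf q hq).2.2 p hp (Ne.symm hqp)
        rw [this, zero_pow (by omega)]
end
end

section
/- Let X be an ACM set of distinct points in P^m × P^n with Kähler different ϑ_X. Then: (a) for all (i,j) ∈ N^2, HF_{ϑ_X}(i,j) ≤ min{HF_{ϑ_X}(i+1,j), HF_{ϑ_X}(i,j+1)}; (b) for all i, j ∈ N, HF_{ϑ_X}(i,0) ≤ HF_{X_1}(i) and HF_{ϑ_X}(0,j) ≤ HF_{X_2}(j). -/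
/- Common setup: finite sets of points in the multiprojective space
   `P^m x P^n` over a field `K` of characteristic zero, their bihomogeneous
   vanishing ideals, bigraded Hilbert functions, Kähler differents,
   separators, Cayley-Bacharach property and complete intersections. -/

open MvPolynomial

set_option maxHeartbeats 1000000
set_option synthInstance.maxHeartbeats 400000

noncomputable section

namespace MultiProjPoints

section Helpers

attribute [local instance] MvPolynomial.weightedGradedAlgebra

lemma component_X_mul {σ M R : Type*} [CommRing R] [AddCommGroup M]
    (w : σ → M) (s : σ) (d : M) (G : MvPolynomial σ R) :
    weightedHomogeneousComponent w d (X s * G) =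
      X s * weightedHomogeneousComponent w (d - w s) G := by
  classical
  ext e
  rw [coeff_weightedHomogeneousComponent, coeff_X_mul', coeff_X_mul',
    coeff_weightedHomogeneousComponent]
  by_cases hs : s ∈ e.support
  · have he : e = (e - Finsupp.single s 1) + Finsupp.single s 1 := by
      rw [tsub_add_cancel_of_le]
      rw [Finsupp.single_le_iff]
      exact Nat.one_le_iff_ne_zero.mpr (Finsupp.mem_support_iff.mp hs)
    have hw : Finsupp.weight w e = Finsupp.weight w (e - Finsupp.single s 1) + w s := by
      conv_lhs => rw [he]
      rw [map_add, Finsupp.weight_single, one_smul]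
    simp only [hs, if_true, hw, eq_sub_iff_add_eq]
  · simp [hs]

/-- The vanishing ideal of a set of points, for a general weight. -/
lemma span_isHomogeneous {σ M R : Type*} [CommRing R] [AddCommGroup M] [DecidableEq M]
    (w : σ → M) (P : MvPolynomial σ R → Prop) :
    (Ideal.span {F | (∃ d, IsWeightedHomogeneous w F d) ∧ P F}).IsHomogeneous
      (weightedHomogeneousSubmodule R w) := by
  apply Ideal.homogeneous_span
  rintro x ⟨⟨d, hd⟩, -⟩
  exact ⟨d, hd⟩

lemma finite_piece {σ M K ι : Type*} [Field K] [AddCommGroup M] [Finite ι]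
    (w : σ → M) (P : ι → σ → K) (I : Ideal (MvPolynomial σ K))
    (hI : I = Ideal.span {F | (∃ d, IsWeightedHomogeneous w F d) ∧ ∀ p, eval (P p) F = 0})
    (d : M) :
    Module.Finite K ↥((weightedHomogeneousSubmodule K w d).map
      (Ideal.Quotient.mkₐ K I).toLinearMap) := by
  have hle : ∀ F ∈ I, ∀ p, eval (P p) F = 0 := by
    intro F hF p
    have : I ≤ RingHom.ker (eval (P p)) := by
      rw [hI, Ideal.span_le]
      rintro G ⟨-, hG⟩
      exact hG p
    exact this hF
  let E : MvPolynomial σ K →ₗ[K] (ι → K) := LinearMap.pi fun p => (aeval (P p)).toLinearMap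
  have hE : ∀ F p, E F p = eval (P p) F := fun F p => by
    simp [E, MvPolynomial.coe_aeval_eq_eval]
  let W := weightedHomogeneousSubmodule K w d
  let f : W →ₗ[K] (MvPolynomial σ K ⧸ I) := (Ideal.Quotient.mkₐ K I).toLinearMap.comp W.subtype
  have hker : LinearMap.ker (E.comp W.subtype) ≤ LinearMap.ker f := by
    rintro ⟨F, hF⟩ h
    have h' : E F = 0 := h
    change (Ideal.Quotient.mk I F) = 0
    rw [Ideal.Quotient.eq_zero_iff_mem, hI]
    apply Ideal.subset_span
    exact ⟨⟨d, hF⟩, fun p => by rw [← hE, h']; rfl⟩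
  have hfin : Module.Finite K (W ⧸ LinearMap.ker (E.comp W.subtype)) :=
    Module.Finite.equiv (E.comp W.subtype).quotKerEquivRange.symm
  have hr : (weightedHomogeneousSubmodule K w d).map
      (Ideal.Quotient.mkₐ K I).toLinearMap = LinearMap.range
        ((LinearMap.ker (E.comp W.subtype)).liftQ f hker) := by
    rw [Submodule.range_liftQ, LinearMap.range_comp, Submodule.range_subtype]
  rw [hr]
  infer_instance

variable (K : Type) [Field K] [CharZero K] [DecidableEq K] {m n : ℕ}

lemma finite_degPieceB (𝕏 : Finset (BiPt K m n)) (d : ℤ × ℤ) :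
    Module.Finite K (degPieceB K (vIdealB K 𝕏) d) := by
  refine finite_piece (biwt m n) (fun p : 𝕏 => Sum.elim p.1.1 p.1.2) _ ?_ d
  simp only [vIdealB, evalB, IsBihom, Subtype.forall]

lemma finite_degPiece1 {N : ℕ} (Y : Finset (Fin (N+1) → K)) (d : ℤ) :
    Module.Finite K (degPiece1 K (vIdeal1 K Y) d) := by
  refine finite_piece (wt1 N) (fun p : Y => p.1) _ ?_ d
  simp only [vIdeal1, IsHom1, Subtype.forall]

lemma weight_biwt (e : (Fin (m+1) ⊕ Fin (n+1)) →₀ ℕ) :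
    Finsupp.weight (biwt m n) e =
      (((∑ a, e (Sum.inl a) : ℕ) : ℤ), ((∑ b, e (Sum.inr b) : ℕ) : ℤ)) := by
  rw [Finsupp.weight_apply, Finsupp.sum_fintype _ _ (by simp), Fintype.sum_sum_type]
  ext <;> simp [biwt, Prod.fst_sum, Prod.snd_sum]

lemma component_neg (G : BiRing K m n) (d : ℤ × ℤ) (hd : d.1 < 0) :
    weightedHomogeneousComponent (biwt m n) d G = 0 := by
  classical
  ext e
  rw [coeff_weightedHomogeneousComponent, if_neg, coeff_zero]
  rintro rfl
  rw [weight_biwt] at hd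
  simp only at hd
  omega

lemma y0_inj (𝕏 : Finset (BiPt K m n)) (hACM : ACMxy K 𝕏) (i : ℕ) :
    ∀ (j : ℤ) (F : BiRing K m n), IsBihom K F ((i : ℤ), j) →
      X (Sum.inr 0) * F ∈ vIdealB K 𝕏 → F ∈ vIdealB K 𝕏 := by
  have step : ∀ (d : ℤ × ℤ) (F : BiRing K m n), IsBihom K F d →
      X (Sum.inr 0) * F ∈ vIdealB K 𝕏 →
      ∃ G, X (Sum.inr 0) * weightedHomogeneousComponent (biwt m n) (d - (1, 0)) G ∈ vIdealB K 𝕏 ∧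
        F - X (Sum.inl 0) * weightedHomogeneousComponent (biwt m n) (d - (1, 0)) G
          ∈ vIdealB K 𝕏 := by
    intro d F hF hy
    have h1 : Ideal.Quotient.mk (vIdealB K 𝕏) F ∈ Ideal.span {x0B K (vIdealB K 𝕏)} := by
      apply hACM.2
      rw [y0B, ← map_mul, Ideal.Quotient.eq_zero_iff_mem.mpr hy]
      exact zero_mem _
    rw [Ideal.mem_span_singleton'] at h1
    obtain ⟨z, hz⟩ := h1
    obtain ⟨G, rfl⟩ := Ideal.Quotient.mk_surjective z
    rw [x0B, ← map_mul, eq_comm, Ideal.Quotient.eq, mul_comm] at hz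
    have h2 := weightedHomogeneousComponent_mem_of_mem K (biwt m n)
      (span_isHomogeneous (biwt m n) (fun F => ∀ p ∈ 𝕏, evalB K p F = 0)) hz d
    rw [map_sub, component_X_mul, hF.weightedHomogeneousComponent_same] at h2
    change F - X (Sum.inl 0) * weightedHomogeneousComponent (biwt m n) (d - (1, 0)) G
          ∈ vIdealB K 𝕏 at h2
    refine ⟨G, ?_, h2⟩
    rw [← Ideal.Quotient.eq_zero_iff_mem]
    apply hACM.1
    rw [x0B, ← map_mul, Ideal.Quotient.eq_zero_iff_mem]
    have h3 := sub_mem hy (Ideal.mul_mem_left _ (X (Sum.inr 0)) h2)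
    convert h3 using 1
    ring
  induction i with
  | zero =>
    intro j F hF hy
    obtain ⟨G, -, h⟩ := step _ F hF hy
    rwa [component_neg K G _ (by simp), mul_zero, sub_zero] at h
  | succ i ih =>
    intro j F hF hy
    obtain ⟨G, h1, h2⟩ := step _ F hF hy
    have h3 := ih j _ (by
      have := weightedHomogeneousComponent_isWeightedHomogeneous (w := biwt m n)
        ((((i + 1 : ℕ) : ℤ), j) - (1, 0)) G
      have he : ((((i + 1 : ℕ) : ℤ), j) - (1, 0) : ℤ × ℤ) = ((i : ℤ), j) := by
        ext <;> simp
      rw [he] at this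
      exact this) (by
      have he : ((((i + 1 : ℕ) : ℤ), j) - (1, 0) : ℤ × ℤ) = ((i : ℤ), j) := by
        ext <;> simp
      rw [he] at h1
      exact h1)
    have he : ((((i + 1 : ℕ) : ℤ), j) - (1, 0) : ℤ × ℤ) = ((i : ℤ), j) := by
      ext <;> simp
    rw [he] at h2
    have h4 := add_mem h2 (Ideal.mul_mem_left _ (X (Sum.inl 0)) h3)
    rwa [sub_add_cancel] at h4

lemma HF_mono (𝕏 : Finset (BiPt K m n)) (J : Ideal (BiRing K m n ⧸ vIdealB K 𝕏))
    (s : Fin (m+1) ⊕ Fin (n+1)) (d d' : ℤ × ℤ) (hd : d' = biwt m n s + d)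
    (hinj : ∀ F : BiRing K m n, IsBihom K F d → X s * F ∈ vIdealB K 𝕏 → F ∈ vIdealB K 𝕏) :
    HFIdealB K (vIdealB K 𝕏) J d ≤ HFIdealB K (vIdealB K 𝕏) J d' := by
  have hfin := finite_degPieceB K 𝕏 d'
  have hfin' : Module.Finite K
      ↥((Submodule.restrictScalars K J) ⊓ degPieceB K (vIdealB K 𝕏) d') :=
    Submodule.finiteDimensional_inf_right _ _
  have hmap : ∀ z ∈ (Submodule.restrictScalars K J) ⊓ degPieceB K (vIdealB K 𝕏) d,
      LinearMap.mulLeft K (Ideal.Quotient.mk (vIdealB K 𝕏) (X s)) z ∈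
        (Submodule.restrictScalars K J) ⊓ degPieceB K (vIdealB K 𝕏) d' := by
    rintro z ⟨hz, F, hF, rfl⟩
    refine ⟨Ideal.mul_mem_left J _ hz, X s * F, ?_, ?_⟩
    · rw [hd]
      exact (isWeightedHomogeneous_X K (biwt m n) s).mul hF
    · exact map_mul (Ideal.Quotient.mk (vIdealB K 𝕏)) _ _
  refine LinearMap.finrank_le_finrank_of_injective
    (f := LinearMap.restrict (LinearMap.mulLeft K (Ideal.Quotient.mk (vIdealB K 𝕏) (X s))) hmap) ?_
  rw [injective_iff_map_eq_zero]
  rintro ⟨z, hz, F, hF, rfl⟩ h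
  have h' := congrArg Subtype.val h
  apply Subtype.ext
  have h2 : Ideal.Quotient.mk (vIdealB K 𝕏) (X s * F) = 0 := by
    rw [map_mul]; exact h'
  rw [Ideal.Quotient.eq_zero_iff_mem] at h2
  exact Ideal.Quotient.eq_zero_iff_mem.mpr (hinj F hF h2)

lemma HF_le {N : ℕ} (𝕏 : Finset (BiPt K m n)) (J : Ideal (BiRing K m n ⧸ vIdealB K 𝕏))
    (Y : Finset (Fin (N+1) → K)) (f : Fin (N+1) → Fin (m+1) ⊕ Fin (n+1))
    (hf : Function.Injective f) (c : ℤ →+ ℤ × ℤ) (hc : Function.Injective c)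
    (hw : ∀ a, biwt m n (f a) = c 1)
    (hY : ∀ p ∈ 𝕏, Sum.elim p.1 p.2 ∘ f ∈ Y) (d : ℤ)
    (hsupp : ∀ e : (Fin (m+1) ⊕ Fin (n+1)) →₀ ℕ, Finsupp.weight (biwt m n) e = c d →
      ∀ s, e s ≠ 0 → s ∈ Set.range f) :
    HFIdealB K (vIdealB K 𝕏) J (c d) ≤ HF1 K Y d := by
  have hwt : ∀ e : Fin (N+1) →₀ ℕ, Finsupp.weight (biwt m n) (e.mapDomain f) =
      c (Finsupp.weight (wt1 N) e) := by
    intro e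
    induction e using Finsupp.induction_linear with
    | zero => simp
    | add a b ha hb => rw [Finsupp.mapDomain_add, map_add, map_add, map_add, ha, hb]
    | single a b => 
      rw [Finsupp.mapDomain_single, Finsupp.weight_single, Finsupp.weight_single, hw, map_nsmul]
      rfl
  have hren : ∀ (F : PRing K N) (k : ℤ), IsHom1 K F k → IsBihom K (rename f F) (c k) := by
    intro F k hF e he
    obtain ⟨u, rfl, hu⟩ := coeff_rename_ne_zero f F e he
    rw [hwt, hF hu]
  have hI : vIdeal1 K Y ≤ (vIdealB K 𝕏).comap (rename f : PRing K N →ₐ[K] BiRing K m n) := by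
    rw [vIdeal1, Ideal.span_le]
    rintro F ⟨⟨k, hk⟩, hF⟩
    apply Ideal.subset_span
    refine ⟨⟨_, hren F k hk⟩, fun p hp => ?_⟩
    rw [evalB, eval_rename]
    exact hF _ (hY p hp)
  let φ : (PRing K N ⧸ vIdeal1 K Y) →ₐ[K] (BiRing K m n ⧸ vIdealB K 𝕏) :=
    Ideal.quotientMapₐ (vIdealB K 𝕏) (rename f) hI
  have hfin := finite_degPiece1 K Y d
  have hfinB := finite_degPieceB K 𝕏 (c d)
  have hle : (Submodule.restrictScalars K J) ⊓ degPieceB K (vIdealB K 𝕏) (c d) ≤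
      (degPiece1 K (vIdeal1 K Y) d).map φ.toLinearMap := by
    rintro z ⟨-, F, hF, rfl⟩
    obtain ⟨G, rfl⟩ := exists_rename_eq_of_vars_subset_range F f hf (by
      intro s hs
      rw [Finset.mem_coe, mem_vars_iff_mem_support] at hs
      obtain ⟨e, he, hs⟩ := hs
      exact hsupp e (hF (mem_support_iff.mp he)) s (Finsupp.mem_support_iff.mp hs))
    refine ⟨Ideal.Quotient.mk _ G, ⟨G, ?_, rfl⟩, rfl⟩
    intro e he
    apply hc
    rw [← hwt]
    apply hF
    rwa [coeff_rename_mapDomain f hf]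
  exact (Submodule.finrank_mono hle).trans (Submodule.finrank_map_le _ _)

end Helpers

end MultiProjPoints

open MultiProjPoints in
/-- Proposition 3.3 (a),(b): monotonicity of the Hilbert
function of the Kähler different `ϑ_𝕏` and its comparison with the Hilbert
functions of `𝕏₁` and `𝕏₂` on the two axes. -/
theorem statement_4 (K : Type) [Field K] [CharZero K] [DecidableEq K]
    (m n : ℕ) (𝕏 : Finset (BiPt K m n)) (hgood : GoodConfig K 𝕏)
    (hne : 𝕏.Nonempty) (hACM : ACMxy K 𝕏)
    (r : ℕ) (H : Fin r → BiRing K m n) (hHhom : ∀ k, ∃ d, IsBihom K (H k) d)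
    (hHgen : Ideal.span (Set.range H) = vIdealB K 𝕏) :
    (∀ i j : ℕ,
      HFIdealB K (vIdealB K 𝕏) (kdiffB K (vIdealB K 𝕏) H) ((i : ℤ), (j : ℤ)) ≤
        min (HFIdealB K (vIdealB K 𝕏) (kdiffB K (vIdealB K 𝕏) H) ((i : ℤ) + 1, (j : ℤ)))
            (HFIdealB K (vIdealB K 𝕏) (kdiffB K (vIdealB K 𝕏) H) ((i : ℤ), (j : ℤ) + 1))) ∧
    (∀ i : ℕ,
      HFIdealB K (vIdealB K 𝕏) (kdiffB K (vIdealB K 𝕏) H) ((i : ℤ), 0) ≤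
        HF1 K (𝕏.image Prod.fst) (i : ℤ)) ∧
    (∀ j : ℕ,
      HFIdealB K (vIdealB K 𝕏) (kdiffB K (vIdealB K 𝕏) H) (0, (j : ℤ)) ≤
        HF1 K (𝕏.image Prod.snd) (j : ℤ)) := by
  refine ⟨fun i j => le_min ?_ ?_, fun i => ?_, fun j => ?_⟩
  · refine HF_mono K 𝕏 _ (Sum.inl 0) _ _ ?_ ?_
    · simp [biwt, add_comm]
    · intro F _ h
      rw [← Ideal.Quotient.eq_zero_iff_mem, map_mul] at h
      exact Ideal.Quotient.eq_zero_iff_mem.mp (hACM.1 _ h)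
  · refine HF_mono K 𝕏 _ (Sum.inr 0) _ _ ?_ (y0_inj K 𝕏 hACM i j)
    simp [biwt, add_comm]
  · refine HF_le K 𝕏 _ _ Sum.inl Sum.inl_injective (AddMonoidHom.inl ℤ ℤ)
      (fun a b h => congrArg Prod.fst h) (fun a => rfl) ?_ i ?_
    · intro p hp
      rw [Sum.elim_comp_inl]
      exact Finset.mem_image_of_mem _ hp
    · intro e he s hs
      rw [weight_biwt] at he
      have h2 := congrArg Prod.snd he
      simp only [AddMonoidHom.inl_apply, Nat.cast_eq_zero, Finset.sum_eq_zero_iff] at h2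
      rcases s with s | s
      · exact ⟨s, rfl⟩
      · exact absurd (h2 s (Finset.mem_univ _)) hs
  · refine HF_le K 𝕏 _ _ Sum.inr Sum.inr_injective (AddMonoidHom.inr ℤ ℤ)
      (fun a b h => congrArg Prod.snd h) (fun a => rfl) ?_ j ?_
    · intro p hp
      rw [Sum.elim_comp_inr]
      exact Finset.mem_image_of_mem _ hp
    · intro e he s hs
      rw [weight_biwt] at he
      have h2 := congrArg Prod.fst he
      simp only [AddMonoidHom.inr_apply, Nat.cast_eq_zero, Finset.sum_eq_zero_iff] at h2
      rcases s with s | s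
      · exact absurd (h2 s (Finset.mem_univ _)) hs
      · exact ⟨s, rfl⟩
end
end
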